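/- arXiv:2505.14475 — 3 statements merged into one kernel-verified Lean document; each statement's English description precedes it below -/
import Mathlib

section
/- Let p ≥ 1 and let V : ℤ → ℝ be p-periodic. Let E_1, …, E_p : [0, π/p] → ℝ be continuous functions that are real-analytic on the open interval (0, π/p), such that for every k ∈ [0, π/p] one has E_1(k) ≤ E_2(k) ≤ ⋯ ≤ E_p(k) and (E_1(k), …, E_p(k)) is the full list, with multiplicity, of eigenvalues of the Floquet matrix H(k). Then there exists δ > 0 such that |E_j''(k)| + |E_j'''(k)| ≥ δ for every j ∈ {1, …, p} and every k ∈ (0, π/p). -/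
/-!
The characteristic polynomial of `H(k)` is `Q - 2 cos (p k)` for a fixed polynomial `Q`
(`exists_discriminant`), so `Q(E_j(k)) = 2 cos (p k)` and the band functions are inverse branches of
the quasimomentum. With `e_j(τ) = E_j(τ / p)`, extended to be even and `2π`-periodic, the
quasimomentum is defined on the upper half-plane by
`Θ(z) = i / (2πp) ∫₀^{2π} ∑_j log (z - e_j(τ)) dτ`. Then `Re Θ ∈ [-π, 0]`, and Jensen's formula
gives `Im Θ(z) = |Im w| / p > 0` whenever `Q(z) = 2 cos w` (`bandMomentum_im_eq`). Thus `Θ` is a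
Herglotz function. Near `x = E_j(k₀)` with `k₀` interior, up to a real constant, its inverse is the
complexification of `w ↦ E_j(k₀ + σ w)`, where `σ` is the sign of `E_j'(k₀)`
(`exists_boundary_curve`).

Let `G = Θ - const` with `G(x) = 0`, and `d = |E_j'(k₀)|`. Julia's lemma says that
`g(z) = -1/G(z) + d/(z - x)` has non-negative imaginary part. Along the preimage under `G` of the
segment `t ↦ i t`, one has `Im g ~ κ t` with `κ = E''² / (4 d²) - σ E''' / (6 d)`, and a boundary
Harnack inequality bounds `κ` from below by the value of `Im g` at a point high up in the
half-plane, where `Θ(z)` is about `i log |z|` and `d / (z - x)` is negligible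
(`boundary_third_order`). This gives `3 E''² + 6 |E'''| ≥ c d³` with a uniform `c > 0`
(`exists_uniform_bound`). Where `d` is small, the identities `Q'(E) E' = -2p sin (p k)` and
`Q''(E) E'² + Q'(E) E'' = -2p² cos (p k)` bound `|E''|` from below directly.
-/

open scoped ENNReal Real

/-- The off-diagonal (hopping) part of the Floquet matrix: `S i j = 1` if `j ≡ i+1` cyclically
(with the Floquet phase `e^{ipk}` on the corner entry in position `(p,1)`), `0` otherwise. -/
noncomputable def floquetHopping (p : ℕ) (k : ℝ) : Matrix (Fin p) (Fin p) ℂ :=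
  Matrix.of fun i j =>
    if ((i : ℕ) + 1) % p = (j : ℕ) then
      (if (i : ℕ) + 1 = p then Complex.exp (Complex.I * p * k) else 1)
    else 0

/-- The Floquet matrix `H(k)`: diagonal entries `V(1), …, V(p)`, entries `1` on the off
diagonals, and corner entries `e^{∓ipk}` in positions `(1,p)` and `(p,1)`. -/
noncomputable def floquetMatrix (p : ℕ) (V : ℤ → ℝ) (k : ℝ) : Matrix (Fin p) (Fin p) ℂ :=
  Matrix.diagonal (fun i : Fin p => ((V ((i : ℕ) + 1) : ℝ) : ℂ)) + floquetHopping p k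
    + (floquetHopping p k).conjTranspose

section Helpers

/-! ### The discriminant -/

section Discriminant

open Matrix

theorem det_sub_single {R m : Type*} [CommRing R] [DecidableEq m] [Fintype m] (A : Matrix m m R)
    (i j : m) (u : R) : (A - Matrix.single i j u).det = A.det - u * A.adjugate j i := by
  have h : A - Matrix.single i j u = A.updateRow i (A i + (-u) • Pi.single j 1) := by
    ext a b
    by_cases ha : a = i
    · subst ha
      by_cases hb : b = j
      · subst hb; simp [sub_eq_add_neg]
      · simp [hb, Ne.symm hb]
    · simp [ha, Ne.symm ha]
  rw [h, det_updateRow_add, det_updateRow_smul, adjugate_apply, updateRow_eq_self]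
  ring

/-- The determinant of a periodic Jacobi matrix, as a function of its corner entries `-v` (upper
right) and `-u` (lower left), is `N.det - u - v + u v q`: each corner cofactor of the Jacobi matrix
`N` comes from a triangular matrix with diagonal `-1`. For `n = 0` both corners are the single entry
of the matrix, and for `n = 1` they add to the entries `-1` of `N`. -/
theorem det_periodic_jacobi {R : Type*} [CommRing R] (n : ℕ)
    (N : Matrix (Fin (n + 1)) (Fin (n + 1)) R)
    (h1 : ∀ i j : Fin (n + 1), (i : ℕ) + 1 = j → N i j = -1)
    (h2 : ∀ i j : Fin (n + 1), (i : ℕ) + 1 < j → N i j = 0)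
    (h3 : ∀ i j : Fin (n + 1), (j : ℕ) + 1 = i → N i j = -1)
    (h4 : ∀ i j : Fin (n + 1), (j : ℕ) + 1 < i → N i j = 0) :
    ∃ q : R, ∀ u v : R, (N - single 0 (Fin.last n) v - single (Fin.last n) 0 u).det
      = N.det - u - v + u * v * q := by
  have hB : (N.submatrix Fin.castSucc Fin.succ).det = (-1) ^ n := by
    rw [det_of_isLowerTriangular]
    · rw [Finset.prod_congr rfl (fun i _ => by rw [submatrix_apply, h1 _ _ (by simp)])]
      simp
    · intro i j hij
      rw [submatrix_apply]
      apply h2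
      have : i < j := hij
      simpa using this
  have hC : (N.submatrix Fin.succ Fin.castSucc).det = (-1) ^ n := by
    rw [det_of_isUpperTriangular]
    · rw [Finset.prod_congr rfl (fun i _ => by rw [submatrix_apply, h3 _ _ (by simp)])]
      simp
    · intro i j hij
      rw [submatrix_apply]
      apply h4
      have : j < i := hij
      simpa using this
  have hadj : N.adjugate (Fin.last n) 0 = 1 := by
    rw [adjugate_fin_succ_eq_det_submatrix]
    have : N.submatrix (Fin.succAbove 0) (Fin.last n).succAbove = N.submatrix Fin.succ Fin.castSucc := by
      ext i j; simp
    rw [this, hC, ← pow_add]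
    simp [← two_mul]
  have hadj2 : ∃ q : R, ∀ v, (N - single 0 (Fin.last n) v).adjugate 0 (Fin.last n) = 1 - v * q := by
    cases n with
    | zero => exact ⟨0, fun v => by simp⟩
    | succ m =>
      refine ⟨(-1) ^ (m + 1) * (N.submatrix Fin.castSucc Fin.succ).adjugate (Fin.last m) 0, fun v => ?_⟩
      rw [adjugate_fin_succ_eq_det_submatrix]
      have : (N - single 0 (Fin.last (m + 1)) v).submatrix (Fin.last (m + 1)).succAbove (Fin.succAbove 0)
          = N.submatrix Fin.castSucc Fin.succ - single 0 (Fin.last m) v := by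
        ext i j
        simp [Matrix.single_apply, Fin.ext_iff, Fin.succAbove_last]
      rw [this, det_sub_single, hB, mul_sub, ← pow_add]
      simp [← two_mul]
      ring
  obtain ⟨q, hq⟩ := hadj2
  refine ⟨q, fun u v => ?_⟩
  rw [det_sub_single, det_sub_single, hadj, hq]
  ring


open Polynomial in
/-- The discriminant: the characteristic polynomial of `H(k)` depends on `k` only through the
constant term `-2 cos (p k)`, because the corner entries `e^{±ipk}` have product `1`. -/
theorem exists_discriminant (p : ℕ) (hp : 1 ≤ p) (V : ℤ → ℝ) :
    ∃ Q : ℂ[X], ∀ k : ℝ, (floquetMatrix p V k).charpoly = Q - C (2 * Complex.cos (p * k)) := by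
  obtain ⟨n, rfl⟩ : ∃ n, p = n + 1 := ⟨p - 1, by omega⟩
  let N : Matrix (Fin (n + 1)) (Fin (n + 1)) ℂ[X] := Matrix.of fun i j =>
    (if i = j then X - C ((V ((i : ℕ) + 1) : ℝ) : ℂ) else 0) - (if (i : ℕ) + 1 = j then 1 else 0)
      - (if (j : ℕ) + 1 = i then 1 else 0)
  obtain ⟨q, hq⟩ := det_periodic_jacobi n N
    (fun i j h => by
      have h1 : i ≠ j := fun h' => by simp [h'] at h
      have h2 : ¬ ((j : ℕ) + 1 = i) := by omega
      simp [N, h, h1, h2])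
    (fun i j h => by
      have h1 : i ≠ j := fun h' => by simp [h'] at h
      have h2 : ¬ ((j : ℕ) + 1 = i) := by omega
      have h3 : ¬ ((i : ℕ) + 1 = j) := by omega
      simp [N, h1, h2, h3])
    (fun i j h => by
      have h1 : i ≠ j := fun h' => by simp [h'] at h
      have h2 : ¬ ((i : ℕ) + 1 = j) := by omega
      simp [N, h, h1, h2])
    (fun i j h => by
      have h1 : i ≠ j := fun h' => by simp [h'] at h
      have h2 : ¬ ((j : ℕ) + 1 = i) := by omega
      have h3 : ¬ ((i : ℕ) + 1 = j) := by omega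
      simp [N, h1, h2, h3])
  refine ⟨N.det + q, fun k => ?_⟩
  set a : ℂ := Complex.exp (Complex.I * ((n + 1 : ℕ) : ℂ) * k) with ha
  set b : ℂ := (starRingEnd ℂ) a with hb
  have hb' : b = Complex.exp (-(Complex.I * ((n + 1 : ℕ) : ℂ) * k)) := by
    rw [hb, ha, ← Complex.exp_conj]
    simp
  have hab : a * b = 1 := by rw [hb', ha, ← Complex.exp_add]; simp
  have habs : a + b = 2 * Complex.cos (((n + 1 : ℕ) : ℂ) * k) := by
    rw [hb', ha, Complex.two_cos]
    congr 2 <;> ring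
  have hM : charmatrix (floquetMatrix (n + 1) V k)
      = N - single 0 (Fin.last n) (C b) - single (Fin.last n) 0 (C a) := by
    have hop : ∀ i j : Fin (n + 1), floquetHopping (n + 1) k i j
        = (if (i : ℕ) + 1 = j then 1 else 0) + (if Fin.last n = i ∧ 0 = j then a else 0) := by
      intro i j
      simp only [floquetHopping, Matrix.of_apply, Fin.ext_iff, Fin.val_last, Fin.val_zero]
      rcases eq_or_ne (i : ℕ) n with hi | hi
      · have : ¬ (n + 1 = (j : ℕ)) := by have := j.isLt; omega
        simp [hi, this, ha]
      · have hlt : (i : ℕ) + 1 < n + 1 := by have := i.isLt; omega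
        rw [Nat.mod_eq_of_lt hlt]
        simp [hi, Ne.symm hi]
    ext1 i j
    rw [charmatrix_apply, floquetMatrix, Matrix.add_apply, Matrix.add_apply, conjTranspose_apply,
      hop, hop]
    simp only [N, Matrix.sub_apply, Matrix.of_apply, Matrix.single_apply, Matrix.diagonal_apply]
    have e1 : star (((if (j : ℕ) + 1 = i then 1 else 0) + (if Fin.last n = j ∧ 0 = i then a else 0)) : ℂ)
      = (if (j : ℕ) + 1 = i then 1 else 0) + (if 0 = i ∧ Fin.last n = j then b else 0) := by
      simp only [and_comm (a := Fin.last n = j)]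
      split_ifs <;> simp [hb]
    rw [e1]
    split_ifs <;> simp <;> ring
  rw [Matrix.charpoly, hM, hq, ← C_mul, hab, ← habs]
  simp
  ring

end Discriminant

open Filter Topology Complex

/-! ### Boundary estimates for Herglotz functions -/

/-- Schwarz–Pick inequality for a holomorphic self-map of the upper half-plane, written without
division. It is the Schwarz lemma after conjugation by Cayley transforms. -/
theorem schwarzPick_aux {f : ℂ → ℂ} (hf : DifferentiableOn ℂ f {z | 0 < z.im})
    (him : ∀ z : ℂ, 0 < z.im → 0 < (f z).im) {z w : ℂ} (hz : 0 < z.im) (hw : 0 < w.im) :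
    z.im * w.im * normSq (f z - (starRingEnd ℂ) (f w)) ≤
      (f z).im * (f w).im * normSq (z - (starRingEnd ℂ) w) := by
  -- This is `1 - |(a - b) / (a - conj b)|²`, multiplied by `|a - conj b|²`.
  have key : ∀ a b : ℂ, normSq (a - (starRingEnd ℂ) b) - normSq (a - b) = 4 * (a.im * b.im) := by
    intro a b
    simp [normSq_apply]
    ring
  set φ : ℂ → ℂ := fun ξ => (w - (starRingEnd ℂ) w * ξ) / (1 - ξ) with hφ
  have hne : ∀ ξ ∈ Metric.ball (0 : ℂ) 1, 1 - ξ ≠ 0 := by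
    intro ξ hξ h
    have : ξ = 1 := (sub_eq_zero.mp h).symm
    simp [this] at hξ
  have hφim : ∀ ξ ∈ Metric.ball (0 : ℂ) 1, 0 < (φ ξ).im := by
    intro ξ hξ
    have h1 : (φ ξ).im = w.im * (1 - normSq ξ) / normSq (1 - ξ) := by
      simp only [hφ, div_im, normSq_apply]
      simp
      ring
    rw [h1]
    have h2 : normSq ξ < 1 := by
      rw [normSq_eq_norm_sq]
      have : ‖ξ‖ < 1 := by simpa using hξ
      nlinarith [norm_nonneg ξ]
    have h3 : 0 < normSq (1 - ξ) := normSq_pos.mpr (hne ξ hξ)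
    have : 0 < 1 - normSq ξ := by linarith
    positivity
  have hden : ∀ a : ℂ, 0 < a.im → ∀ b : ℂ, 0 < b.im → a - (starRingEnd ℂ) b ≠ 0 := by
    intro a ha b hb h
    have := congrArg Complex.im h
    simp at this
    linarith
  set h : ℂ → ℂ := fun ξ => (f (φ ξ) - f w) / (f (φ ξ) - (starRingEnd ℂ) (f w)) with hh
  have hφd : DifferentiableOn ℂ φ (Metric.ball 0 1) := by
    intro ξ hξ
    apply DifferentiableAt.differentiableWithinAt
    have := hne ξ hξ
    simp only [hφ]
    fun_prop (disch := assumption)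
  have hfφ : DifferentiableOn ℂ (fun ξ => f (φ ξ)) (Metric.ball 0 1) :=
    hf.comp hφd (fun ξ hξ => hφim ξ hξ)
  have hd : DifferentiableOn ℂ h (Metric.ball 0 1) := by
    refine (hfφ.sub_const _).div (hfφ.sub_const _) ?_
    intro ξ hξ
    exact hden _ (him _ (hφim ξ hξ)) _ (him _ hw)
  have hlt : ∀ a : ℂ, 0 < a.im → ∀ b : ℂ, 0 < b.im → ‖(a - b) / (a - (starRingEnd ℂ) b)‖ < 1 := by
    intro a ha b hb
    rw [norm_div, div_lt_one (norm_pos_iff.mpr (hden a ha b hb))]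
    have := key a b
    rw [normSq_eq_norm_sq, normSq_eq_norm_sq] at this
    have h2 : 0 < a.im * b.im := mul_pos ha hb
    exact lt_of_pow_lt_pow_left₀ 2 (norm_nonneg _) (by linarith)
  have hmaps : Set.MapsTo h (Metric.ball 0 1) (Metric.ball 0 1) := by
    intro ξ hξ
    rw [mem_ball_zero_iff]
    exact hlt _ (him _ (hφim ξ hξ)) _ (him _ hw)
  have h0 : h 0 = 0 := by simp [hh, hφ]
  set ξ := (z - w) / (z - (starRingEnd ℂ) w) with hξ
  have hξlt : ‖ξ‖ < 1 := hlt z hz w hw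
  have hφξ : φ ξ = z := by
    have e1 := hden z hz w hw
    have e2 : w - (starRingEnd ℂ) w ≠ 0 := hden w hw w hw
    simp only [hφ]
    have e3 : 1 - ξ = (w - (starRingEnd ℂ) w) / (z - (starRingEnd ℂ) w) := by
      rw [hξ]; field_simp; ring
    rw [e3, hξ, div_eq_iff (div_ne_zero e2 e1)]
    field_simp
    ring
  have hS := Complex.norm_le_norm_of_mapsTo_ball hd (hmaps.mono_right Metric.ball_subset_closedBall) h0 hξlt
  simp only [hh, hφξ] at hS
  rw [hξ, norm_div, norm_div] at hS
  have p1 : 0 < ‖f z - (starRingEnd ℂ) (f w)‖ := norm_pos_iff.mpr (hden _ (him z hz) _ (him w hw))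
  have p2 : 0 < ‖z - (starRingEnd ℂ) w‖ := norm_pos_iff.mpr (hden z hz w hw)
  rw [div_le_div_iff₀ p1 p2] at hS
  have hS2 := mul_self_le_mul_self (by positivity) hS
  have k1 := key (f z) (f w)
  have k2 := key z w
  simp only [normSq_eq_norm_sq] at k1 k2 ⊢
  nlinarith

/-- Schwarz–Pick for a holomorphic map from the open to the closed upper half-plane, by applying
`schwarzPick_aux` to `f + i δ` and letting `δ → 0`. -/
theorem schwarzPick {f : ℂ → ℂ} (hf : DifferentiableOn ℂ f {z | 0 < z.im})
    (him : ∀ z : ℂ, 0 < z.im → 0 ≤ (f z).im) {z w : ℂ} (hz : 0 < z.im) (hw : 0 < w.im) :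
    z.im * w.im * normSq (f z - (starRingEnd ℂ) (f w)) ≤
      (f z).im * (f w).im * normSq (z - (starRingEnd ℂ) w) := by
  have h : ∀ δ : ℝ, 0 < δ → z.im * w.im * normSq ((f z + δ * I) - (starRingEnd ℂ) (f w + δ * I)) ≤
      (f z + δ * I).im * (f w + δ * I).im * normSq (z - (starRingEnd ℂ) w) := by
    intro δ hδ
    refine schwarzPick_aux (f := fun z => f z + δ * I) (hf.add_const _) ?_ hz hw
    intro z hz
    have := him z hz
    simp
    linarith
  have hc : Tendsto (fun δ : ℝ => z.im * w.im * normSq ((f z + δ * I) - (starRingEnd ℂ) (f w + δ * I)))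
      (𝓝[>] 0) (𝓝 (z.im * w.im * normSq (f z - (starRingEnd ℂ) (f w)))) := by
    have : Continuous (fun δ : ℝ => z.im * w.im * normSq ((f z + δ * I) - (starRingEnd ℂ) (f w + δ * I))) := by
      fun_prop
    have := this.tendsto 0
    simp only [ofReal_zero, zero_mul, add_zero] at this
    exact this.mono_left nhdsWithin_le_nhds
  have hc2 : Tendsto (fun δ : ℝ => (f z + δ * I).im * (f w + δ * I).im * normSq (z - (starRingEnd ℂ) w))
      (𝓝[>] 0) (𝓝 ((f z).im * (f w).im * normSq (z - (starRingEnd ℂ) w))) := by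
    have : Continuous (fun δ : ℝ => (f z + δ * I).im * (f w + δ * I).im * normSq (z - (starRingEnd ℂ) w)) := by
      fun_prop
    have := this.tendsto 0
    simp only [ofReal_zero, zero_mul, add_zero] at this
    exact this.mono_left nhdsWithin_le_nhds
  exact le_of_tendsto_of_tendsto hc hc2 (by filter_upwards [self_mem_nhdsWithin] with δ hδ using h δ hδ)

/-- A form of Julia's lemma: if `G` maps the curve `c`, which ends at the real point `x` with vertical
speed `d`, to the vertical segment `t ↦ i t`, then `Im z · d · |G z|² ≤ Im (G z) · |z - x|²`.
This is Schwarz–Pick for the pair `z, c t` in the limit `t → 0`. -/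
theorem julia {G : ℂ → ℂ} (hG : DifferentiableOn ℂ G {z | 0 < z.im})
    (him : ∀ z : ℂ, 0 < z.im → 0 ≤ (G z).im) {x d : ℝ} {c : ℝ → ℂ}
    (hc : Tendsto c (𝓝[>] 0) (𝓝 x)) (hcd : Tendsto (fun t => (c t).im / t) (𝓝[>] 0) (𝓝 d))
    (hcim : ∀ᶠ t in 𝓝[>] (0 : ℝ), 0 < (c t).im)
    (hGc : ∀ᶠ t in 𝓝[>] (0 : ℝ), G (c t) = t * I) {z : ℂ} (hz : 0 < z.im) :
    z.im * d * normSq (G z) ≤ (G z).im * normSq (z - x) := by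
  have e : ∀ᶠ t in 𝓝[>] (0 : ℝ), z.im * ((c t).im / t) * normSq (G z - (starRingEnd ℂ) (t * I)) ≤
      (G z).im * normSq (z - (starRingEnd ℂ) (c t)) := by
    filter_upwards [self_mem_nhdsWithin, hcim, hGc] with t ht h1 h2
    have := schwarzPick hG him hz h1
    rw [h2] at this
    have ht : 0 < t := ht
    simp only [mul_im, ofReal_re, I_im, ofReal_im, I_re] at this
    rw [mul_div_assoc', div_mul_eq_mul_div, div_le_iff₀ ht]
    linarith
  have l1 : Tendsto (fun t : ℝ => z.im * ((c t).im / t) * normSq (G z - (starRingEnd ℂ) (t * I)))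
      (𝓝[>] 0) (𝓝 (z.im * d * normSq (G z))) := by
    refine (hcd.const_mul _).mul ?_
    have : Continuous (fun t : ℝ => normSq (G z - (starRingEnd ℂ) (t * I))) := by fun_prop
    have := this.tendsto 0
    simp only [ofReal_zero, zero_mul, map_zero, sub_zero] at this
    exact this.mono_left nhdsWithin_le_nhds
  have l2 : Tendsto (fun t : ℝ => (G z).im * normSq (z - (starRingEnd ℂ) (c t)))
      (𝓝[>] 0) (𝓝 ((G z).im * normSq (z - x))) := by
    refine Tendsto.const_mul _ ?_
    have : Continuous (fun y : ℂ => normSq (z - (starRingEnd ℂ) y)) := by fun_prop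
    have := (this.tendsto x).comp hc
    simpa [Function.comp_def] using this
  exact le_of_tendsto_of_tendsto l1 l2 e

/-- Boundary Harnack inequality: if `Im g` vanishes at the boundary point `x` at the rate `κ t` along
the curve `c`, then `κ` bounds `Im g` at every interior point from above. -/
theorem boundary_harnack {g : ℂ → ℂ} (hg : DifferentiableOn ℂ g {z | 0 < z.im})
    (him : ∀ z : ℂ, 0 < z.im → 0 ≤ (g z).im) {x d κ : ℝ} {c : ℝ → ℂ}
    (hc : Tendsto c (𝓝[>] 0) (𝓝 x)) (hcd : Tendsto (fun t => (c t).im / t) (𝓝[>] 0) (𝓝 d))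
    (hcim : ∀ᶠ t in 𝓝[>] (0 : ℝ), 0 < (c t).im)
    (hgc : Tendsto (fun t => (g (c t)).im / t) (𝓝[>] 0) (𝓝 κ)) {z : ℂ} (hz : 0 < z.im)
    (hgz : 0 < (g z).im) :
    z.im * d * (g z).im ≤ κ * normSq (z - x) := by
  have e : ∀ᶠ t in 𝓝[>] (0 : ℝ), z.im * ((c t).im / t) * (g z).im ≤
      ((g (c t)).im / t) * normSq (z - (starRingEnd ℂ) (c t)) := by
    filter_upwards [self_mem_nhdsWithin, hcim] with t ht h1
    have h := schwarzPick hg him hz h1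
    have ht : 0 < t := ht
    have h3 : (g z).im ^ 2 ≤ normSq (g z - (starRingEnd ℂ) (g (c t))) := by
      have := him _ h1
      have e : (g z - (starRingEnd ℂ) (g (c t))).im = (g z).im + (g (c t)).im := by simp
      rw [normSq_apply, e]
      nlinarith [mul_self_nonneg (g z - (starRingEnd ℂ) (g (c t))).re, mul_nonneg hgz.le this]
    have h4 : z.im * (c t).im * (g z).im ≤ (g (c t)).im * normSq (z - (starRingEnd ℂ) (c t)) := by
      have := (mul_le_mul_of_nonneg_left h3 (mul_pos hz h1).le).trans h
      nlinarith
    rw [mul_div_assoc', div_mul_eq_mul_div, div_mul_eq_mul_div, div_le_div_iff_of_pos_right ht]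
    exact h4
  have l2 : Tendsto (fun t : ℝ => normSq (z - (starRingEnd ℂ) (c t)))
      (𝓝[>] 0) (𝓝 (normSq (z - x))) := by
    have : Continuous (fun y : ℂ => normSq (z - (starRingEnd ℂ) y)) := by fun_prop
    have := (this.tendsto x).comp hc
    simpa [Function.comp_def] using this
  exact le_of_tendsto_of_tendsto ((hcd.const_mul _).mul_const _) (hgc.mul l2) e

/-- Let `G` be a holomorphic self-map of the upper half-plane whose local inverse at the real point
`x` has the expansion `x + d w + A w² + B w³ + ⋯`. Julia's lemma says that `g = -1/G + d/(z - x)` has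
non-negative imaginary part, and along the curve `Im g ~ t (A² - d B) / d²`, so the boundary Harnack
inequality bounds `A² - d B` from below by `Im g` at an interior point. -/
theorem boundary_third_order {G : ℂ → ℂ} (hG : DifferentiableOn ℂ G {z | 0 < z.im})
    (him : ∀ z : ℂ, 0 < z.im → 0 < (G z).im) {x d A B : ℝ} (hd : 0 < d) {r : ℂ → ℂ}
    (hr : ContinuousAt r 0) (hr0 : r 0 = B)
    (hcurve : ∀ᶠ t : ℝ in 𝓝[>] 0, ∀ z : ℂ, z = x + t * I * (d + t * I * (A + t * I * r (t * I))) →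
        0 < z.im ∧ G z = t * I) {z : ℂ} (hz : 0 < z.im) :
    z.im * d * normSq (G z) ≤ (G z).im * normSq (z - x) ∧
    (0 < (G z).im / normSq (G z) - d * z.im / normSq (z - x) →
      z.im * d ^ 3 * ((G z).im / normSq (G z) - d * z.im / normSq (z - x)) ≤
        (A ^ 2 - d * B) * normSq (z - x)) := by
  set q : ℂ → ℂ := fun w => d + w * (A + w * r w) with hq
  set c : ℝ → ℂ := fun t => x + t * I * q (t * I) with hc
  have hvert : Tendsto (fun t : ℝ => (t * I : ℂ)) (𝓝[>] 0) (𝓝 0) :=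
    ((by fun_prop : Continuous fun t : ℝ => (t * I : ℂ)).tendsto' _ _ (by simp)).mono_left
      nhdsWithin_le_nhds
  have hqc : ContinuousAt q 0 := by fun_prop
  have hq0 : q 0 = d := by simp [hq]
  have hqt : Tendsto (fun t : ℝ => q (t * I)) (𝓝[>] 0) (𝓝 d) := by
    have := hqc.tendsto.comp hvert
    rwa [hq0] at this
  have hct : Tendsto c (𝓝[>] 0) (𝓝 x) := by
    have := (hvert.mul hqt).const_add (x : ℂ)
    simpa using this
  have hcd : Tendsto (fun t => (c t).im / t) (𝓝[>] 0) (𝓝 d) := by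
    have h1 : Tendsto (fun t : ℝ => (q (t * I)).re) (𝓝[>] 0) (𝓝 d) :=
      (continuous_re.tendsto (d : ℂ)).comp hqt
    refine h1.congr' ?_
    filter_upwards [self_mem_nhdsWithin] with t ht
    have ht : 0 < t := ht
    simp only [hc]
    rw [add_im, ofReal_im, zero_add, mul_assoc, im_ofReal_mul, I_mul_im]
    field_simp
  have hcim : ∀ᶠ t in 𝓝[>] (0 : ℝ), 0 < (c t).im := by
    filter_upwards [hcurve] with t ht using (ht _ rfl).1
  have hGc : ∀ᶠ t in 𝓝[>] (0 : ℝ), G (c t) = t * I := by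
    filter_upwards [hcurve] with t ht using (ht _ rfl).2
  have hjulia : ∀ z : ℂ, 0 < z.im → z.im * d * normSq (G z) ≤ (G z).im * normSq (z - x) :=
    fun z hz => julia hG (fun z hz => (him z hz).le) hct hcd hcim hGc hz
  refine ⟨hjulia z hz, fun hpos => ?_⟩
  set g : ℂ → ℂ := fun z => -(G z)⁻¹ + d * (z - x)⁻¹ with hg
  have hGne : ∀ z : ℂ, 0 < z.im → G z ≠ 0 := fun z hz h => by
    have := him z hz
    simp [h] at this
  have hzne : ∀ z : ℂ, 0 < z.im → z - x ≠ 0 := fun z hz h => by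
    have := congrArg Complex.im h
    simp at this
    linarith
  have hgim : ∀ z, (g z).im = (G z).im / normSq (G z) - d * z.im / normSq (z - x) := by
    intro z
    simp only [hg, add_im, neg_im, inv_im, im_ofReal_mul, sub_im, ofReal_im, sub_zero]
    ring
  have hgd : DifferentiableOn ℂ g {z | 0 < z.im} := by
    refine (hG.inv hGne).neg.add ?_
    refine DifferentiableOn.const_mul (DifferentiableOn.inv (by fun_prop) hzne) _
  have hgnn : ∀ z : ℂ, 0 < z.im → 0 ≤ (g z).im := by
    intro z hz
    rw [hgim, sub_nonneg, div_le_div_iff₀ (normSq_pos.mpr (hzne z hz)) (normSq_pos.mpr (hGne z hz))]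
    linarith [hjulia z hz]
  have hκ : Tendsto (fun t => (g (c t)).im / t) (𝓝[>] 0) (𝓝 ((A ^ 2 - d * B) / d ^ 2)) := by
    have h1 : ContinuousAt (fun w : ℂ => (A * (A + w * r w) - d * r w) / (d * q w)) 0 := by
      refine ContinuousAt.div (by fun_prop) (by fun_prop) ?_
      rw [hq0]
      simp [hd.ne']
    have h2 := (continuous_re.tendsto _).comp (h1.tendsto.comp hvert)
    have h3 : ((A * (A + 0 * r 0) - d * r 0) / (d * q 0) : ℂ).re = (A ^ 2 - d * B) / d ^ 2 := by
      have : ((A * (A + 0 * r 0) - d * r 0) / (d * q 0) : ℂ) = ((A ^ 2 - d * B) / d ^ 2 : ℝ) := by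
        rw [hq0, hr0]; push_cast; ring
      rw [this, ofReal_re]
    rw [h3] at h2
    refine h2.congr' ?_
    have hqne : ∀ᶠ t : ℝ in 𝓝[>] 0, q (t * I) ≠ 0 :=
      hqt.eventually_ne (by simpa using hd.ne')
    filter_upwards [self_mem_nhdsWithin, hGc, hqne] with t ht h4 h5
    have ht : 0 < t := ht
    have htC : (t : ℂ) ≠ 0 := by exact_mod_cast ht.ne'
    have hdC : (d : ℂ) ≠ 0 := by exact_mod_cast hd.ne'
    have h6 : g (c t) = ((-(A / d) : ℝ) : ℂ) + t * (I *
        ((A * (A + (t * I) * r (t * I)) - d * r (t * I)) / (d * q (t * I)))) := by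
      have h7 : c t - x = t * I * q (t * I) := by simp [hc]
      have h8 : q (t * I) = d + t * I * (A + t * I * r (t * I)) := rfl
      simp only [hg]
      rw [h4, h7]
      have := I_ne_zero
      push_cast
      field_simp
      rw [h8]
      ring
    rw [h6, add_im, ofReal_im, zero_add, im_ofReal_mul, I_mul_im]
    simp only [Function.comp_apply]
    field_simp
  have hfin := boundary_harnack hgd hgnn hct hcd hcim hκ hz (by rw [hgim]; exact hpos)
  rw [hgim] at hfin
  rw [div_mul_eq_mul_div, le_div_iff₀ (by positivity)] at hfin
  linarith

/-! ### The quasimomentum -/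

/-- The quasimomentum `Θ(z) = i / (2πp) ∫₀^{2π} ∑ⱼ log (z - eⱼ(τ)) dτ` on the upper half-plane, where
`eⱼ(τ)` are the band functions in terms of the phase `τ = p k`, extended to all real `τ`. -/
noncomputable def bandMomentum (p : ℕ) (e : Fin p → ℝ → ℝ) (z : ℂ) : ℂ :=
  I / (2 * π * p) * ∫ τ in (0 : ℝ)..2 * π, ∑ j, Complex.log (z - e j τ)

theorem sub_ofReal_mem_slitPlane {z : ℂ} (hz : 0 < z.im) (a : ℝ) : z - a ∈ slitPlane := by
  rw [mem_slitPlane_iff]; right; simp; exact hz.ne'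

theorem continuous_log_sub {p : ℕ} {e : Fin p → ℝ → ℝ} (he : ∀ j, Continuous (e j))
    {z : ℂ} (hz : 0 < z.im) (j : Fin p) : Continuous fun τ => Complex.log (z - e j τ) := by
  have := he j
  exact Continuous.clog (by fun_prop) (fun τ => sub_ofReal_mem_slitPlane hz _)

theorem bandMomentum_re {p : ℕ} {e : Fin p → ℝ → ℝ} (he : ∀ j, Continuous (e j))
    {z : ℂ} (hz : 0 < z.im) :
    (bandMomentum p e z).re = -(1 / (2 * π * p)) * ∫ τ in (0 : ℝ)..2 * π, ∑ j, arg (z - e j τ) := by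
  have hc : Continuous fun τ => ∑ j, Complex.log (z - e j τ) :=
    continuous_finsetSum _ fun j _ => continuous_log_sub he hz j
  have h := (imCLM.intervalIntegral_comp_comm (hc.intervalIntegrable (μ := MeasureTheory.volume) 0 (2 * π)))
  simp only [imCLM_apply, im_sum, log_im] at h
  rw [h, bandMomentum]
  have : (I / (2 * π * p) : ℂ) = ((1 / (2 * π * p) : ℝ) : ℂ) * I := by push_cast; ring
  rw [this, mul_assoc, re_ofReal_mul]
  simp
 
theorem bandMomentum_im {p : ℕ} {e : Fin p → ℝ → ℝ} (he : ∀ j, Continuous (e j))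
    {z : ℂ} (hz : 0 < z.im) :
    (bandMomentum p e z).im =
      (1 / (2 * π * p)) * ∫ τ in (0 : ℝ)..2 * π, ∑ j, Real.log ‖z - e j τ‖ := by
  have hc : Continuous fun τ => ∑ j, Complex.log (z - e j τ) :=
    continuous_finsetSum _ fun j _ => continuous_log_sub he hz j
  have h := (reCLM.intervalIntegral_comp_comm (hc.intervalIntegrable (μ := MeasureTheory.volume) 0 (2 * π)))
  simp only [reCLM_apply, re_sum, log_re] at h
  rw [h, bandMomentum]
  have : (I / (2 * π * p) : ℂ) = ((1 / (2 * π * p) : ℝ) : ℂ) * I := by push_cast; ring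
  rw [this, mul_assoc, im_ofReal_mul]
  simp

theorem average_mem_Icc {p : ℕ} (hp : 1 ≤ p) {f : Fin p → ℝ → ℝ} (hf : ∀ j, Continuous (f j))
    {a b : ℝ} (h : ∀ j τ, f j τ ∈ Set.Icc a b) :
    (1 / (2 * π * p)) * ∫ τ in (0 : ℝ)..2 * π, ∑ j, f j τ ∈ Set.Icc a b := by
  have hp' : (0 : ℝ) < p := by exact_mod_cast hp
  have hpi := Real.pi_pos
  have hc : Continuous fun τ => ∑ j, f j τ := continuous_finsetSum _ fun j _ => hf j
  have hi := hc.intervalIntegrable (μ := MeasureTheory.volume) 0 (2 * π)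
  have h1 : ∫ τ in (0 : ℝ)..2 * π, (p * a) ≤ ∫ τ in (0 : ℝ)..2 * π, ∑ j, f j τ := by
    refine intervalIntegral.integral_mono (by positivity) (by simp) hi fun τ => ?_
    simpa using Finset.card_nsmul_le_sum Finset.univ (fun j => f j τ) a (fun j _ => (h j τ).1)
  have h2 : ∫ τ in (0 : ℝ)..2 * π, ∑ j, f j τ ≤ ∫ τ in (0 : ℝ)..2 * π, (p * b) := by
    refine intervalIntegral.integral_mono (by positivity) hi (by simp) fun τ => ?_
    simpa using Finset.sum_le_card_nsmul Finset.univ (fun j => f j τ) b (fun j _ => (h j τ).2)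
  simp only [intervalIntegral.integral_const, smul_eq_mul, sub_zero] at h1 h2
  rw [one_div_mul_eq_div]
  constructor
  · rw [le_div_iff₀ (by positivity)]; linarith
  · rw [div_le_iff₀ (by positivity)]; linarith

theorem bandMomentum_re_mem {p : ℕ} (hp : 1 ≤ p) {e : Fin p → ℝ → ℝ} (he : ∀ j, Continuous (e j))
    {z : ℂ} (hz : 0 < z.im) : (bandMomentum p e z).re ∈ Set.Icc (-π) 0 := by
  have h := average_mem_Icc hp (f := fun j τ => arg (z - e j τ)) (a := 0) (b := π)
    (fun j => by
      have := continuous_im.comp (continuous_log_sub he hz j)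
      simpa [Function.comp_def, log_im] using this)
    (fun j τ => ⟨arg_nonneg_iff.mpr (by simpa using hz.le), arg_le_pi _⟩)
  rw [bandMomentum_re he hz]
  constructor <;> linarith [h.1, h.2]

theorem bandMomentum_im_mem {p : ℕ} (hp : 1 ≤ p) {e : Fin p → ℝ → ℝ} (he : ∀ j, Continuous (e j))
    {z : ℂ} (hz : 0 < z.im) {R : ℝ} (hR : ∀ j τ, ‖z - e j τ‖ ≤ R) :
    (bandMomentum p e z).im ∈ Set.Icc (Real.log z.im) (Real.log R) := by
  rw [bandMomentum_im he hz]
  have hn : ∀ j τ, z.im ≤ ‖z - e j τ‖ := fun j τ => by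
    have := abs_im_le_norm (z - e j τ)
    simp at this
    exact (le_abs_self _).trans this
  refine average_mem_Icc hp (f := fun j τ => Real.log ‖z - e j τ‖) (fun j => ?_) fun j τ => ⟨?_, ?_⟩
  · have := continuous_re.comp (continuous_log_sub he hz j)
    simpa [Function.comp_def, log_re] using this
  · exact Real.log_le_log hz (hn j τ)
  · exact Real.log_le_log (hz.trans_le (hn j τ)) (hR j τ)

theorem differentiableOn_bandMomentum {p : ℕ} {e : Fin p → ℝ → ℝ} (he : ∀ j, Continuous (e j)) :
    DifferentiableOn ℂ (bandMomentum p e) {z | 0 < z.im} := by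
  intro z hz
  have hz : 0 < z.im := hz
  apply DifferentiableAt.differentiableWithinAt
  unfold bandMomentum
  refine DifferentiableAt.const_mul ?_ _
  have hs : {w : ℂ | z.im / 2 < w.im} ∈ 𝓝 z :=
    (isOpen_lt continuous_const continuous_im).mem_nhds (by simp; linarith)
  have hs' : ∀ w : ℂ, z.im / 2 < w.im → 0 < w.im := fun w hw => by linarith
  have := intervalIntegral.hasDerivAt_integral_of_dominated_loc_of_deriv_le (μ := MeasureTheory.volume)
    (a := 0) (b := 2 * π)
    (F := fun w τ => ∑ j, Complex.log (w - e j τ)) (F' := fun w τ => ∑ j, 1 / (w - e j τ))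
    (x₀ := z) (bound := fun _ => ∑ _j : Fin p, 2 / z.im) hs ?_ ?_ ?_ ?_ ?_ ?_
  · exact this.2.differentiableAt
  · filter_upwards [hs] with w hw
    exact (continuous_finsetSum _ fun j _ => continuous_log_sub he (hs' w hw) j).aestronglyMeasurable
  · exact (continuous_finsetSum _ fun j _ => continuous_log_sub he hz j).intervalIntegrable _ _
  · refine (continuous_finsetSum _ fun j _ => ?_).aestronglyMeasurable
    have := he j
    exact Continuous.div continuous_const (by fun_prop)
      (fun τ => slitPlane_ne_zero (sub_ofReal_mem_slitPlane hz _))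
  · refine Eventually.of_forall fun τ _ w hw => ?_
    refine norm_sum_le_of_le _ fun j _ => ?_
    have h1 := abs_im_le_norm (w - e j τ)
    simp at h1
    have h2 : z.im / 2 ≤ ‖w - e j τ‖ := le_trans (le_of_lt hw) ((le_abs_self _).trans h1)
    rw [norm_div, norm_one, div_le_div_iff₀ (by linarith) hz]
    linarith
  · exact intervalIntegrable_const
  · refine Eventually.of_forall fun τ _ w hw => ?_
    refine HasDerivAt.fun_sum fun j _ => ?_
    exact ((hasDerivAt_id w).sub_const _).clog (sub_ofReal_mem_slitPlane (hs' w hw) _)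

/-- Jensen's formula for `2 cos w - 2 cos τ`, which up to a unimodular factor is
`(e^{iτ} - e^{iw}) (e^{iτ} - e^{-iw})`. -/
theorem integral_log_norm_cos_sub {w : ℂ} (hw : ∀ τ : ℝ, 2 * Complex.cos w - 2 * Complex.cos τ ≠ 0) :
    ∫ τ in (0 : ℝ)..2 * π, Real.log ‖2 * Complex.cos w - 2 * Complex.cos τ‖ = 2 * π * |w.im| := by
  have h1 := circleAverage_log_norm_sub_const_eq_posLog (a := exp (I * w))
  have h2 := circleAverage_log_norm_sub_const_eq_posLog (a := exp (-(I * w)))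
  have i1 := circleIntegrable_log_norm_sub_const (a := exp (I * w)) (c := 0) 1
  have i2 := circleIntegrable_log_norm_sub_const (a := exp (-(I * w))) (c := 0) 1
  have h3 := Real.circleAverage_add i1 i2
  rw [h1, h2, Real.circleAverage_def, smul_eq_mul, inv_mul_eq_iff_eq_mul₀ (by positivity)] at h3
  have h4 : Real.posLog ‖exp (I * w)‖ + Real.posLog ‖exp (-(I * w))‖ = |w.im| := by
    simp only [Real.posLog, norm_exp, Real.log_exp]
    simp
    rcases le_total 0 w.im with h | h
    · rw [max_eq_left (by linarith), max_eq_right h, abs_of_nonneg h, zero_add]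
    · rw [max_eq_right (by linarith), max_eq_left h, abs_of_nonpos h, add_zero]
  rw [h4] at h3
  rw [← h3]
  refine intervalIntegral.integral_congr fun τ _ => ?_
  have e : (2 * Complex.cos w - 2 * Complex.cos τ) * exp (τ * I)
      = - ((exp (τ * I) - exp (I * w)) * (exp (τ * I) - exp (-(I * w)))) := by
    rw [Complex.two_cos, Complex.two_cos]
    have a1 : exp (I * w) * exp (-(I * w)) = 1 := by rw [← exp_add]; simp
    have a2 : exp (-τ * I) * exp (τ * I) = 1 := by rw [← exp_add]; simp
    simp only [neg_mul, mul_comm w I]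
    rw [neg_mul] at a2
    linear_combination (-1) * a2 + a1
  have e2 := congrArg norm e
  rw [norm_mul, norm_exp_ofReal_mul_I, mul_one, norm_neg, norm_mul] at e2
  have hpos : 0 < ‖exp (τ * I) - exp (I * w)‖ * ‖exp (τ * I) - exp (-(I * w))‖ := by
    rw [← e2]; exact norm_pos_iff.mpr (hw τ)
  simp only [Pi.add_apply, circleMap, ofReal_one, one_mul, zero_add]
  rw [e2, Real.log_mul (left_ne_zero_of_mul hpos.ne') (right_ne_zero_of_mul hpos.ne')]

/-- The relation between the quasimomentum and the discriminant: `Im (p Θ(z)) = |Im w|` whenever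
`Q(z) = 2 cos w`. -/
theorem bandMomentum_im_eq {p : ℕ} {e : Fin p → ℝ → ℝ} (he : ∀ j, Continuous (e j))
    {Q : Polynomial ℂ} (hQ : ∀ (τ : ℝ) (z : ℂ), Q.eval z - 2 * Complex.cos τ = ∏ j, (z - e j τ))
    {z w : ℂ} (hz : 0 < z.im) (hw : Q.eval z = 2 * Complex.cos w) :
    (bandMomentum p e z).im = |w.im| / p := by
  have hne : ∀ j τ, z - e j τ ≠ 0 := fun j τ => slitPlane_ne_zero (sub_ofReal_mem_slitPlane hz _)
  rw [bandMomentum_im he hz]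
  have h := integral_log_norm_cos_sub (w := w) (fun τ => by
    rw [← hw, hQ]
    exact Finset.prod_ne_zero_iff.mpr fun j _ => hne j τ)
  have h2 : ∀ τ : ℝ, ∑ j, Real.log ‖z - e j τ‖ = Real.log ‖2 * Complex.cos w - 2 * Complex.cos τ‖ := by
    intro τ
    rw [← hw, hQ, norm_prod, Real.log_prod (fun j _ => norm_ne_zero_iff.mpr (hne j τ))]
  simp only [h2]
  rw [h]
  field_simp

/-- If the imaginary part were zero, `Q(z)` would equal `2 cos τ` for a real `τ`, making the
non-real `z` one of the real numbers `eⱼ(τ)`. -/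
theorem bandMomentum_im_pos {p : ℕ} (hp : 1 ≤ p) {e : Fin p → ℝ → ℝ} (he : ∀ j, Continuous (e j))
    {Q : Polynomial ℂ} (hQ : ∀ (τ : ℝ) (z : ℂ), Q.eval z - 2 * Complex.cos τ = ∏ j, (z - e j τ))
    {z : ℂ} (hz : 0 < z.im) : 0 < (bandMomentum p e z).im := by
  obtain ⟨w, hw⟩ := Complex.cos_surjective (Q.eval z / 2)
  have hw' : Q.eval z = 2 * Complex.cos w := by rw [hw]; ring
  rw [bandMomentum_im_eq he hQ hz hw']
  have hp' : (0 : ℝ) < p := by exact_mod_cast hp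
  refine div_pos (abs_pos.mpr fun h0 => ?_) hp'
  have hwr : w = (w.re : ℂ) := by apply Complex.ext <;> simp [h0]
  have := hQ w.re z
  rw [← hwr, hw', sub_self] at this
  obtain ⟨j, -, hj⟩ := Finset.prod_eq_zero_iff.mp this.symm
  exact slitPlane_ne_zero (sub_ofReal_mem_slitPlane hz _) hj

/-! ### The local inverse of the quasimomentum -/

/-- A real-analytic `f` extends near `k₀` to a complex-analytic function `F` (recentred at `0`), with
third order Taylor expansion and continuous remainder coefficient `r`. -/
theorem exists_complexification {f : ℝ → ℝ} {k₀ : ℝ} (hf : AnalyticAt ℝ f k₀) :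
    ∃ F r : ℂ → ℂ, AnalyticAt ℂ F 0 ∧ (∀ᶠ t : ℝ in 𝓝 0, F t = f (k₀ + t)) ∧
      ContinuousAt r 0 ∧ r 0 = (iteratedDeriv 3 f k₀ / 6 : ℝ) ∧
      ∀ w, F w = f k₀ + w * (deriv f k₀ + w * ((iteratedDeriv 2 f k₀ / 2 : ℝ) + w * r w)) := by
  set c : ℕ → ℝ := fun n => iteratedDeriv n f k₀ / n.factorial with hc
  have hP := hf.hasFPowerSeriesAt
  rw [← hc] at hP
  set Pc := FormalMultilinearSeries.ofScalars ℂ (fun n => (c n : ℂ)) with hPc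
  have hrad : 0 < Pc.radius := by
    refine hP.radius_pos.trans_le ?_
    refine FormalMultilinearSeries.radius_le_of_le fun n => ?_
    rw [hPc, FormalMultilinearSeries.ofScalars_norm, FormalMultilinearSeries.ofScalars_norm]
    simp
  have hF : HasFPowerSeriesAt Pc.sum Pc 0 := (Pc.hasFPowerSeriesOnBall hrad).hasFPowerSeriesAt
  set F := Pc.sum with hFdef
  have hd1 := hF.has_fpower_series_dslope_fslope
  have hd2 := hd1.has_fpower_series_dslope_fslope
  have hd3 := hd2.has_fpower_series_dslope_fslope
  have hcoe : ∀ {g : ℂ → ℂ} {P : FormalMultilinearSeries ℂ ℂ ℂ}, HasFPowerSeriesAt g P 0 →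
      g 0 = P.coeff 0 := fun h => (h.coeff_zero 1).symm
  have v0 : F 0 = f k₀ := by
    rw [hcoe hF, hPc, FormalMultilinearSeries.coeff_ofScalars]; simp [hc]
  have v1 : dslope F 0 0 = deriv f k₀ := by
    rw [hcoe hd1, FormalMultilinearSeries.coeff_fslope, hPc, FormalMultilinearSeries.coeff_ofScalars]
    simp [hc]
  have v2 : dslope (dslope F 0) 0 0 = (iteratedDeriv 2 f k₀ / 2 : ℝ) := by
    rw [hcoe hd2, FormalMultilinearSeries.coeff_fslope, FormalMultilinearSeries.coeff_fslope, hPc,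
      FormalMultilinearSeries.coeff_ofScalars]
    simp [hc, Nat.factorial]
  have v3 : dslope (dslope (dslope F 0) 0) 0 0 = (iteratedDeriv 3 f k₀ / 6 : ℝ) := by
    rw [hcoe hd3, FormalMultilinearSeries.coeff_fslope, FormalMultilinearSeries.coeff_fslope,
      FormalMultilinearSeries.coeff_fslope, hPc, FormalMultilinearSeries.coeff_ofScalars]
    simp [hc, Nat.factorial]
  refine ⟨F, dslope (dslope (dslope F 0) 0) 0, hF.analyticAt, ?_, hd3.continuousAt, v3, ?_⟩
  · have h1 := hasFPowerSeriesAt_iff.mp hP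
    have h2 := (continuous_ofReal.tendsto' (0 : ℝ) (0 : ℂ) (by simp)).eventually
      (hasFPowerSeriesAt_iff.mp hF)
    filter_upwards [h1, h2] with t h1 h2
    have h3 := hasSum_ofReal.mpr h1
    rw [zero_add] at h2
    refine h2.unique ?_
    convert! h3 using 2 with n
    rw [hPc, FormalMultilinearSeries.coeff_ofScalars, FormalMultilinearSeries.coeff_ofScalars]
    simp
  · intro w
    have s1 := sub_smul_dslope F 0 w
    have s2 := sub_smul_dslope (dslope F 0) 0 w
    have s3 := sub_smul_dslope (dslope (dslope F 0) 0) 0 w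
    rw [v0] at s1; rw [v1] at s2; rw [v2] at s3
    simp only [sub_zero, smul_eq_mul] at s1 s2 s3
    linear_combination - s1 - w * s2 - w ^ 2 * s3

/-- A holomorphic function on a connected open set that takes only real values is constant, by the
open mapping theorem. -/
theorem const_of_im_eq_zero {g : ℂ → ℂ} {U : Set ℂ} (hU : IsOpen U) (hUc : IsPreconnected U)
    (hg : DifferentiableOn ℂ g U) (him : ∀ z ∈ U, (g z).im = 0) {z₀ : ℂ} (hz₀ : z₀ ∈ U) :
    ∀ z ∈ U, g z = (g z₀).re := by
  rcases (hg.analyticOnNhd hU).is_constant_or_isOpen hUc with ⟨w, hw⟩ | h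
  · intro z hz
    rw [hw z hz, ← hw z₀ hz₀]
    apply Complex.ext <;> simp [him z₀ hz₀]
  · exfalso
    obtain ⟨ε, hε, hb⟩ := Metric.isOpen_iff.mp (h U subset_rfl hU) (g z₀) ⟨z₀, hz₀, rfl⟩
    have : g z₀ + (ε / 2 : ℝ) * I ∈ Metric.ball (g z₀) ε := by
      rw [Metric.mem_ball, dist_eq_norm, add_sub_cancel_left, norm_mul, norm_I, mul_one, norm_real,
        Real.norm_eq_abs, abs_of_pos (by linarith)]
      linarith
    obtain ⟨y, hy, hyz⟩ := hb this
    have h1 := congrArg Complex.im hyz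
    rw [him y hy] at h1
    simp [him z₀ hz₀] at h1
    linarith

/-- Up to a real constant `b`, the quasimomentum inverts the complexified band function: with
`F(w)` the extension of `f (k₀ + σ w)`, where the sign `σ` makes `F` increasing on the real axis, `F`
maps a small upper half-disc into the upper half-plane and `Θ(F(w)) - w = b` there, since the
imaginary part of the left-hand side vanishes. The conclusion records this on the segment `w = i t`. -/
theorem exists_boundary_curve {p : ℕ} (hp : 1 ≤ p) {e : Fin p → ℝ → ℝ} (he : ∀ j, Continuous (e j))
    {Q : Polynomial ℂ} (hQ : ∀ (τ : ℝ) (z : ℂ), Q.eval z - 2 * Complex.cos τ = ∏ j, (z - e j τ))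
    {f : ℝ → ℝ} {k₀ : ℝ} (hf : AnalyticAt ℝ f k₀) (hk : 0 < Real.sin (p * k₀))
    (hfQ : ∀ᶠ t in 𝓝 k₀, Q.eval (f t : ℂ) = 2 * Complex.cos (p * t))
    {σ : ℝ} (hσ : σ ^ 2 = 1) (hd : 0 < σ * deriv f k₀) :
    ∃ b ∈ Set.Icc (-π) 0, ∃ r : ℂ → ℂ, ContinuousAt r 0 ∧ r 0 = (σ * iteratedDeriv 3 f k₀ / 6 : ℝ) ∧
      ∀ᶠ t : ℝ in 𝓝[>] 0, ∀ z : ℂ, z = f k₀ + t * I * ((σ * deriv f k₀ : ℝ) +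
        t * I * ((iteratedDeriv 2 f k₀ / 2 : ℝ) + t * I * r (t * I))) →
        0 < z.im ∧ bandMomentum p e z - b = t * I := by
  have hp' : (0 : ℝ) < p := by exact_mod_cast hp
  have hσ0 : σ ≠ 0 := by rintro rfl; norm_num at hσ
  have hσC : (σ : ℂ) ^ 2 = 1 := by exact_mod_cast hσ
  obtain ⟨F₀, r₀, hF₀, hF₀r, hr₀, hr₀v, hF₀eq⟩ := exists_complexification hf
  have hmul : Tendsto (fun w : ℂ => (σ : ℂ) * w) (𝓝 0) (𝓝 0) :=
    (by fun_prop : Continuous fun w : ℂ => (σ : ℂ) * w).tendsto' _ _ (by simp)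
  set F : ℂ → ℂ := fun w => F₀ (σ * w) with hF
  set r : ℂ → ℂ := fun w => σ * r₀ (σ * w) with hr
  have hFeq : ∀ w, F w = f k₀ + w * ((σ * deriv f k₀ : ℝ) + w * ((iteratedDeriv 2 f k₀ / 2 : ℝ)
      + w * r w)) := by
    intro w
    simp only [hF, hr, hF₀eq]
    push_cast
    linear_combination (w ^ 2 * (iteratedDeriv 2 f k₀ / 2 : ℂ) + σ * w ^ 3 * r₀ (σ * w)) * hσC
  have hrc : ContinuousAt r 0 := by
    have h0 : ContinuousAt (fun w : ℂ => r₀ (σ * w)) 0 :=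
      ContinuousAt.comp (f := fun w : ℂ => (σ : ℂ) * w) (by simpa using hr₀) (by fun_prop)
    exact continuousAt_const.mul h0
  have hr0 : r 0 = (σ * iteratedDeriv 3 f k₀ / 6 : ℝ) := by
    simp only [hr, mul_zero, hr₀v]; push_cast; ring
  have hFa : AnalyticAt ℂ F 0 :=
    AnalyticAt.comp (f := fun w : ℂ => (σ : ℂ) * w) (by simpa using hF₀) (by fun_prop)
  -- The relation `Q (f t) = 2 cos (p t)` extends to complex arguments by the identity theorem.
  have hQF : ∀ᶠ w in 𝓝 (0 : ℂ), Q.eval (F w) - 2 * Complex.cos (p * (k₀ + σ * w)) = 0 := by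
    have han : AnalyticAt ℂ (fun w => Q.eval (F w) - 2 * Complex.cos (p * (k₀ + σ * w))) 0 := by
      refine AnalyticAt.sub ?_ ?_
      · have := hFa.aeval_polynomial Q
        simpa [Polynomial.aeval_def] using this
      · fun_prop
    refine han.frequently_zero_iff_eventually_zero.mp ?_
    have hreal : ∀ᶠ t : ℝ in 𝓝 0,
        Q.eval (F t) - 2 * Complex.cos (p * (k₀ + σ * t)) = 0 := by
      have m1 : Tendsto (fun t : ℝ => σ * t) (𝓝 0) (𝓝 0) :=
        (by fun_prop : Continuous fun t : ℝ => σ * t).tendsto' _ _ (by simp)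
      have m2 : Tendsto (fun t : ℝ => k₀ + σ * t) (𝓝 0) (𝓝 k₀) :=
        (by fun_prop : Continuous fun t : ℝ => k₀ + σ * t).tendsto' _ _ (by simp)
      filter_upwards [m1.eventually hF₀r, m2.eventually hfQ] with t h1 h2
      have : F t = f (k₀ + σ * t) := by rw [← h1]; simp [hF]
      rw [this, h2]
      simp
    have hmap : Tendsto (fun t : ℝ => (t : ℂ)) (𝓝[≠] 0) (𝓝[≠] 0) := by
      refine tendsto_nhdsWithin_iff.mpr ⟨?_, ?_⟩
      · exact (continuous_ofReal.tendsto' (0 : ℝ) (0 : ℂ) (by simp)).mono_left nhdsWithin_le_nhds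
      · filter_upwards [self_mem_nhdsWithin] with t ht
        simpa using ht
    exact hmap.frequently (Eventually.frequently (hreal.filter_mono nhdsWithin_le_nhds))
  have hQreal : ∀ z : ℂ, z.im = 0 → (Q.eval z).im = 0 := by
    intro z hz
    have h := hQ 0 z
    have hz' : z = (z.re : ℂ) := by apply Complex.ext <;> simp [hz]
    have : ∏ j, (z - e j 0) = ((∏ j, (z.re - e j 0) : ℝ) : ℂ) := by
      rw [hz']; push_cast; simp
    rw [this] at h
    have h2 : Q.eval z = ((∏ j, (z.re - e j 0) + 2 * Real.cos 0 : ℝ) : ℂ) := by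
      push_cast at h ⊢
      linear_combination h
    rw [h2, ofReal_im]
  have hsin : ∀ᶠ w in 𝓝 (0 : ℂ), 0 < Real.sin (p * (k₀ + σ * w.re)) := by
    have : Continuous fun w : ℂ => Real.sin (p * (k₀ + σ * w.re)) := by fun_prop
    exact this.continuousAt.eventually_const_lt (by simpa using hk)
  obtain ⟨ρ, hρ, hball⟩ := Metric.eventually_nhds_iff_ball.mp
    ((hQF.and hsin).and hFa.eventually_analyticAt)
  set U : Set ℂ := Metric.ball 0 ρ ∩ {w | 0 < w.im} with hU
  have hUo : IsOpen U := Metric.isOpen_ball.inter (isOpen_lt continuous_const continuous_im)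
  have hUc : IsPreconnected U :=
    ((convex_ball _ _).inter (convex_halfSpace_im_gt 0)).isPreconnected
  have hFd : DifferentiableOn ℂ F U := fun w hw =>
    (hball w hw.1).2.differentiableAt.differentiableWithinAt
  -- If `F w` is real then so is `cos (p (k₀ + σ w))`, whose imaginary part is
  -- `-sin (p (k₀ + σ Re w)) * sinh (p σ Im w)`.
  have hne : ∀ w ∈ U, (F w).im ≠ 0 := by
    intro w hw h0
    obtain ⟨⟨h1, h2⟩, -⟩ := hball w hw.1
    have h3 := hQreal _ h0
    rw [sub_eq_zero.mp h1] at h3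
    have h4 : (p * (k₀ + σ * w) : ℂ) = ((p * (k₀ + σ * w.re) : ℝ) : ℂ) + ((p * σ * w.im : ℝ) : ℂ) * I := by
      apply Complex.ext <;> simp
      ring
    rw [h4, Complex.cos_add_mul_I] at h3
    have h5 : (2 * (Complex.cos ((p * (k₀ + σ * w.re) : ℝ) : ℂ) * Complex.cosh ((p * σ * w.im : ℝ) : ℂ)
        - Complex.sin ((p * (k₀ + σ * w.re) : ℝ) : ℂ) * Complex.sinh ((p * σ * w.im : ℝ) : ℂ) * I)).im
        = -(2 * (Real.sin (p * (k₀ + σ * w.re)) * Real.sinh (p * σ * w.im))) := by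
      rw [← ofReal_cos, ← ofReal_cosh, ← ofReal_sin, ← ofReal_sinh]
      simp only [mul_im, sub_im, sub_re, mul_re, ofReal_re, ofReal_im, I_re, I_im, re_ofNat, im_ofNat]
      ring
    rw [h5] at h3
    have h6 : Real.sinh (p * σ * w.im) ≠ 0 := by
      rw [Ne, Real.sinh_eq_zero]
      have : 0 < w.im := hw.2
      positivity
    have := mul_ne_zero h2.ne' h6
    apply this
    linarith
  have hvert : Tendsto (fun t : ℝ => (t * I : ℂ)) (𝓝[>] 0) (𝓝 0) :=
    ((by fun_prop : Continuous fun t : ℝ => (t * I : ℂ)).tendsto' _ _ (by simp)).mono_left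
      nhdsWithin_le_nhds
  have hvU : ∀ᶠ t : ℝ in 𝓝[>] 0, (t * I : ℂ) ∈ U := by
    filter_upwards [hvert.eventually (Metric.ball_mem_nhds 0 hρ), self_mem_nhdsWithin] with t h1 h2
    exact ⟨h1, by simpa using h2⟩
  have hpos₁ : ∀ᶠ t : ℝ in 𝓝[>] 0, 0 < (F (t * I)).im := by
    have hl : Tendsto (fun w : ℂ => (((σ * deriv f k₀ : ℝ) : ℂ)
        + w * ((iteratedDeriv 2 f k₀ / 2 : ℝ) + w * r w)).re) (𝓝 0) (𝓝 (σ * deriv f k₀)) := by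
      have : ContinuousAt (fun w : ℂ => (((σ * deriv f k₀ : ℝ) : ℂ)
        + w * ((iteratedDeriv 2 f k₀ / 2 : ℝ) + w * r w)).re) 0 := by fun_prop
      have := this.tendsto
      simpa using this
    filter_upwards [(hl.comp hvert).eventually_const_lt hd, self_mem_nhdsWithin] with t h1 h2
    have h2 : 0 < t := h2
    rw [hFeq, add_im, ofReal_im, zero_add, mul_assoc, im_ofReal_mul, I_mul_im]
    exact mul_pos h2 h1
  obtain ⟨t₁, ht₁U, ht₁⟩ := (hvU.and hpos₁).exists
  have hpos : ∀ w ∈ U, 0 < (F w).im := by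
    intro w hw
    by_contra hcon
    have hcon' : (F w).im ≤ 0 := not_lt.mp hcon
    obtain ⟨y, hy, hy0⟩ := hUc.intermediate_value hw ht₁U
      (continuous_im.comp_continuousOn hFd.continuousOn) ⟨hcon', ht₁.le⟩
    exact hne y hy hy0
  have hΘd : DifferentiableOn ℂ (fun w => bandMomentum p e (F w) - w) U :=
    ((differentiableOn_bandMomentum he).comp hFd hpos).sub differentiableOn_id
  have hΘim : ∀ w ∈ U, (bandMomentum p e (F w) - w).im = 0 := by
    intro w hw
    obtain ⟨⟨h1, -⟩, -⟩ := hball w hw.1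
    rw [sub_im, bandMomentum_im_eq he hQ (hpos w hw) (sub_eq_zero.mp h1)]
    have h3 : (p * (k₀ + σ * w) : ℂ).im = p * (σ * w.im) := by simp
    have h4 : |σ| = 1 := (pow_eq_one_iff_of_nonneg (abs_nonneg σ) two_ne_zero).mp (by rw [sq_abs, hσ])
    rw [h3, abs_mul, abs_mul, h4, one_mul, abs_of_pos hp', abs_of_pos hw.2]
    field_simp
    ring
  have hconst := const_of_im_eq_zero hUo hUc hΘd hΘim ht₁U
  refine ⟨(bandMomentum p e (F (t₁ * I)) - t₁ * I).re, ?_, r, hrc, hr0, ?_⟩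
  · have := bandMomentum_re_mem hp he (hpos _ ht₁U)
    simpa using this
  · filter_upwards [hvU] with t ht z hz
    rw [← hFeq] at hz
    rw [hz]
    refine ⟨hpos _ ht, ?_⟩
    rw [← hconst _ ht]
    ring

/-! ### The uniform bound -/

/-- The key estimate `3 (f'')² + 6 |f'''| ≥ c |f'|³`, with `c` independent of the band and of the
quasimomentum. It follows from `boundary_third_order` for `G = Θ - b`, evaluated at the points
`x + i η`: `η = e` gives `|f'| ≤ 3`, and a large `η = ε` gives the bound from below. -/
theorem exists_uniform_bound {p : ℕ} (hp : 1 ≤ p) {e : Fin p → ℝ → ℝ} (he : ∀ j, Continuous (e j))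
    {Q : Polynomial ℂ} (hQ : ∀ (τ : ℝ) (z : ℂ), Q.eval z - 2 * Complex.cos τ = ∏ j, (z - e j τ))
    {M : ℝ} (hM : ∀ j τ, |e j τ| ≤ M) (hM0 : 0 ≤ M) :
    ∃ c > 0, ∀ (f : ℝ → ℝ) (k₀ σ : ℝ), AnalyticAt ℝ f k₀ → 0 < Real.sin (p * k₀) →
      (∀ᶠ t in 𝓝 k₀, Q.eval (f t : ℂ) = 2 * Complex.cos (p * t)) → |f k₀| ≤ M →
      σ ^ 2 = 1 → 0 < σ * deriv f k₀ →
      c * (σ * deriv f k₀) ^ 3 ≤ 3 * iteratedDeriv 2 f k₀ ^ 2 + 6 * |iteratedDeriv 3 f k₀| := by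
  -- The height `ε` is so large that `log ε` dominates `|Re (Θ - b)| ≤ π`, while `6 log (ε + 2 M) < ε`.
  set ε : ℝ := 2 * M + 300 with hε
  set s : ℝ := ε + 2 * M with hs
  have hεpos : 0 < ε := by positivity
  have hspos : 0 < s := by positivity
  have hlogε : 4 ≤ Real.log ε := by
    rw [Real.le_log_iff_exp_le hεpos]
    have h1 : Real.exp 4 = Real.exp 1 ^ 4 := by rw [← Real.exp_nat_mul]; norm_num
    have h2 : Real.exp 1 ^ 4 ≤ 3 ^ 4 :=
      pow_le_pow_left₀ (Real.exp_pos 1).le (by linarith [Real.exp_one_lt_d9]) 4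
    rw [h1]
    linarith
  have hlogs : Real.log ε ≤ Real.log s := Real.log_le_log hεpos (by linarith)
  have hsε : 6 * Real.log s < ε := by
    have h1 := Real.log_le_sub_one_of_pos (Real.sqrt_pos.mpr hspos)
    rw [Real.log_sqrt hspos.le] at h1
    have h2 : (12 * √s) ^ 2 < ε ^ 2 := by
      rw [mul_pow, Real.sq_sqrt hspos.le, hs, hε]
      nlinarith
    have h3 := lt_of_pow_lt_pow_left₀ 2 hεpos.le h2
    linarith
  set c₀ : ℝ := 1 / (2 * Real.log s) - 3 / ε with hc₀
  have hc₀pos : 0 < c₀ := by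
    rw [hc₀, sub_pos, div_lt_div_iff₀ hεpos (by linarith)]
    linarith
  refine ⟨12 * c₀ / ε, by positivity, ?_⟩
  intro f k₀ σ hf hk hfQ hfM hσ hd
  obtain ⟨b, hb, r, hr, hr0, hcurve⟩ := exists_boundary_curve hp he hQ hf hk hfQ hσ hd
  set d : ℝ := σ * deriv f k₀ with hd_def
  set x : ℝ := f k₀ with hx
  have key := fun {z : ℂ} (hz : 0 < z.im) => boundary_third_order (G := fun z => bandMomentum p e z - b)
    ((differentiableOn_bandMomentum he).sub_const _)
    (fun z hz => by simpa using bandMomentum_im_pos hp he hQ hz) hd hr hr0 hcurve hz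
  have hnorm : ∀ η : ℝ, 0 < η → ∀ j τ, ‖(x + η * I : ℂ) - e j τ‖ ≤ η + 2 * M := by
    intro η hη j τ
    have h1 : (x + η * I : ℂ) - e j τ = ((x - e j τ : ℝ) : ℂ) + η * I := by push_cast; ring
    rw [h1]
    refine (norm_add_le _ _).trans ?_
    rw [norm_mul, norm_I, norm_real, norm_real, Real.norm_eq_abs, Real.norm_eq_abs, abs_of_pos hη]
    have := abs_sub x (e j τ)
    have := hM j τ
    linarith
  have hzim : ∀ η : ℝ, (x + η * I : ℂ).im = η := by intro η; simp
  have hzx : ∀ η : ℝ, normSq ((x + η * I : ℂ) - x) = η ^ 2 := by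
    intro η; rw [add_sub_cancel_left]; simp [normSq_apply]; ring
  have hIm : ∀ η : ℝ, 0 < η → (bandMomentum p e (x + η * I) - b).im
      ∈ Set.Icc (Real.log η) (Real.log (η + 2 * M)) := by
    intro η hη
    have := bandMomentum_im_mem hp he (z := x + η * I) (by rw [hzim]; exact hη) (hnorm η hη)
    rw [hzim] at this
    simpa using this
  have hd3 : d ≤ 3 := by
    have h1 := (key (z := x + (Real.exp 1 : ℝ) * I) (by rw [hzim]; exact Real.exp_pos 1)).1
    have h2 := (hIm (Real.exp 1) (Real.exp_pos 1)).1
    rw [hzim, hzx] at h1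
    rw [Real.log_exp] at h2
    set Z := bandMomentum p e (x + (Real.exp 1 : ℝ) * I) - b with hZ
    have h3 : Z.im ^ 2 ≤ normSq Z := by rw [normSq_apply]; nlinarith [mul_self_nonneg Z.re]
    have hexp := Real.exp_pos 1
    have h4 : Real.exp 1 * d * Z.im ^ 2 ≤ Z.im * Real.exp 1 ^ 2 :=
      (mul_le_mul_of_nonneg_left h3 (by positivity)).trans h1
    have h5 : d * Z.im ≤ Real.exp 1 := by
      have hpos : 0 < Real.exp 1 * Z.im := by positivity
      refine le_of_mul_le_mul_left ?_ hpos
      linarith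
    have h6 : d * 1 ≤ d * Z.im := mul_le_mul_of_nonneg_left h2 hd.le
    linarith [Real.exp_one_lt_d9]
  have h1 := (key (z := x + ε * I) (by rw [hzim]; exact hεpos)).2
  have h2 := hIm ε hεpos
  rw [hzim, hzx] at h1
  set Z := bandMomentum p e (x + ε * I) - b with hZ
  have hZre : Z.re ^ 2 ≤ Z.im ^ 2 := by
    have h3 := bandMomentum_re_mem hp he (z := x + ε * I) (by rw [hzim]; exact hεpos)
    have h4 : |Z.re| ≤ π := by
      rw [hZ, sub_re, ofReal_re, abs_le]
      constructor <;> linarith [h3.1, h3.2, hb.1, hb.2]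
    have h5 := Real.pi_lt_four
    rw [sq_le_sq, abs_of_pos (by linarith [h2.1] : 0 < Z.im)]
    linarith [h2.1]
  have hZim : 0 < Z.im := by linarith [h2.1]
  have hlow : c₀ ≤ Z.im / normSq Z - d * ε / ε ^ 2 := by
    have h3 : 1 / (2 * Real.log s) ≤ Z.im / normSq Z := by
      have h4 : 0 < normSq Z := by
        rw [normSq_apply]; nlinarith [mul_self_nonneg Z.re]
      rw [div_le_div_iff₀ (by linarith) h4, normSq_apply]
      have : Z.im * Z.im ≤ Z.im * Real.log s := mul_le_mul_of_nonneg_left h2.2 hZim.le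
      nlinarith
    have h4 : d * ε / ε ^ 2 ≤ 3 / ε := by
      rw [div_le_div_iff₀ (by positivity) hεpos]
      nlinarith [sq_nonneg ε]
    linarith
  have h3 := h1 (hc₀pos.trans_le hlow)
  have h4 : ε * d ^ 3 * c₀ ≤ ε * d ^ 3 * (Z.im / normSq Z - d * ε / ε ^ 2) :=
    mul_le_mul_of_nonneg_left hlow (by positivity)
  have h5 : d ^ 3 * c₀ ≤ ((iteratedDeriv 2 f k₀ / 2) ^ 2 - d * (σ * iteratedDeriv 3 f k₀ / 6)) * ε := by
    refine le_of_mul_le_mul_left ?_ hεpos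
    linarith
  have h6 : -(d * (σ * iteratedDeriv 3 f k₀)) ≤ 3 * |iteratedDeriv 3 f k₀| := by
    have hσ1 : |σ| = 1 :=
      (pow_eq_one_iff_of_nonneg (abs_nonneg σ) two_ne_zero).mp (by rw [sq_abs, hσ])
    refine (neg_le_abs _).trans ?_
    rw [abs_mul d, abs_mul σ (iteratedDeriv 3 f k₀), hσ1, one_mul, abs_of_pos hd]
    exact mul_le_mul_of_nonneg_right hd3 (abs_nonneg _)
  rw [div_mul_eq_mul_div, div_le_iff₀ hεpos]
  nlinarith

/-- The first two derivatives of the relation `Q (f t) = 2 cos (p t)`. -/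
theorem discriminant_deriv_identities {Q : Polynomial ℂ} {f : ℝ → ℝ} {p : ℝ} {U : Set ℝ}
    (hU : IsOpen U) (hf : AnalyticOnNhd ℝ f U)
    (hfQ : ∀ t ∈ U, Q.eval (f t : ℂ) = 2 * Complex.cos (p * t)) {k : ℝ} (hk : k ∈ U) :
    Q.derivative.eval (f k : ℂ) * ((deriv f k : ℝ) : ℂ) = (-2 * p * Real.sin (p * k) : ℝ) ∧
    Q.derivative.derivative.eval (f k : ℂ) * ((deriv f k : ℝ) : ℂ) ^ 2
      + Q.derivative.eval (f k : ℂ) * ((iteratedDeriv 2 f k : ℝ) : ℂ) = (-2 * p ^ 2 * Real.cos (p * k) : ℝ) := by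
  have hdf : ∀ t ∈ U, HasDerivAt (fun t : ℝ => (f t : ℂ)) ((deriv f t : ℝ) : ℂ) t := fun t ht =>
    (hf t ht).differentiableAt.hasDerivAt.ofReal_comp
  have hcomp : ∀ (P : Polynomial ℂ), ∀ t ∈ U, HasDerivAt (fun t : ℝ => P.eval (f t : ℂ))
      (P.derivative.eval (f t : ℂ) * ((deriv f t : ℝ) : ℂ)) t := fun P t ht =>
    HasDerivAt.comp (h₂ := fun z : ℂ => P.eval z) t (P.hasDerivAt (f t : ℂ)) (hdf t ht)
  have hlin : ∀ t : ℝ, HasDerivAt (fun t : ℝ => p * t) p t := fun t => by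
    simpa using (hasDerivAt_id t).const_mul p
  have h1 : ∀ t ∈ U, Q.derivative.eval (f t : ℂ) * ((deriv f t : ℝ) : ℂ) = (-2 * p * Real.sin (p * t) : ℝ) := by
    intro t ht
    have hc : HasDerivAt (fun t : ℝ => ((2 * Real.cos (p * t) : ℝ) : ℂ))
        ((2 * (-Real.sin (p * t) * p) : ℝ) : ℂ) t :=
      (((hlin t).cos).const_mul 2).ofReal_comp
    have hc2 : HasDerivAt (fun t : ℝ => Q.eval (f t : ℂ)) ((2 * (-Real.sin (p * t) * p) : ℝ) : ℂ) t := by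
      refine hc.congr_of_eventuallyEq ?_
      filter_upwards [hU.mem_nhds ht] with u hu
      rw [hfQ u hu]; push_cast; rfl
    rw [(hcomp Q t ht).unique hc2]
    push_cast; ring
  refine ⟨h1 k hk, ?_⟩
  have hddf : HasDerivAt (fun t : ℝ => ((deriv f t : ℝ) : ℂ)) ((iteratedDeriv 2 f k : ℝ) : ℂ) k := by
    have := (hf.deriv k hk).differentiableAt.hasDerivAt.ofReal_comp
    rwa [iteratedDeriv_succ, iteratedDeriv_one]
  have hL := (hcomp Q.derivative k hk).mul hddf
  have hc : HasDerivAt (fun t : ℝ => ((-2 * p * Real.sin (p * t) : ℝ) : ℂ))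
      ((-2 * p * (Real.cos (p * k) * p) : ℝ) : ℂ) k :=
    (((hlin k).sin).const_mul (-2 * p)).ofReal_comp
  have hL2 := hc.congr_of_eventuallyEq (f₁ := fun t : ℝ => Q.derivative.eval (f t : ℂ) * ((deriv f t : ℝ) : ℂ)) (by
    filter_upwards [hU.mem_nhds hk] with u hu
    exact h1 u hu)
  have := hL.unique hL2
  push_cast at this ⊢
  linear_combination this

end Helpers

/-- **Corollary 2.2: uniform lower bound on `|E_j''| + |E_j'''|`.**
If `E_1 ≤ ⋯ ≤ E_p` are the band functions (continuous on `[0, π/p]`, real-analytic on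
`(0, π/p)`, listing the eigenvalues of the Floquet matrix `H(k)` with multiplicity), then
there is `δ > 0` with `|E_j''(k)| + |E_j'''(k)| ≥ δ` for all `j` and all `k ∈ (0, π/p)`. -/
theorem band_functions_second_third_derivative_lower_bound
    (p : ℕ) (hp : 1 ≤ p) (V : ℤ → ℝ) (hV : ∀ n : ℤ, V (n + p) = V n)
    (E : Fin p → ℝ → ℝ)
    (hcont : ∀ j : Fin p, ContinuousOn (E j) (Set.Icc 0 (π / p)))
    (hana : ∀ j : Fin p, AnalyticOnNhd ℝ (E j) (Set.Ioo 0 (π / p)))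
    (hmono : ∀ k ∈ Set.Icc 0 (π / p), ∀ j j' : Fin p, j ≤ j' → E j k ≤ E j' k)
    (hchar : ∀ k ∈ Set.Icc 0 (π / p),
      Matrix.charpoly (floquetMatrix p V k)
        = ∏ j : Fin p, (Polynomial.X - Polynomial.C ((E j k : ℝ) : ℂ))) :
    ∃ δ > 0, ∀ j : Fin p, ∀ k ∈ Set.Ioo 0 (π / p),
      δ ≤ |iteratedDeriv 2 (E j) k| + |iteratedDeriv 3 (E j) k| := by
  have hp0 : (0 : ℝ) < p := by exact_mod_cast hp
  have hp1 : (1 : ℝ) ≤ p := by exact_mod_cast hp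
  obtain ⟨Q, hQ⟩ := exists_discriminant p hp V
  have hprod : ∀ k ∈ Set.Icc 0 (π / p), ∀ z : ℂ,
      Q.eval z - 2 * Complex.cos (p * k) = ∏ j, (z - E j k) := by
    intro k hk z
    have h := congrArg (Polynomial.eval z) ((hQ k).symm.trans (hchar k hk))
    simpa [Polynomial.eval_prod] using h
  -- The band functions in the phase `τ = p k`, extended from `[0, π]` to even `2π`-periodic functions.
  set e : Fin p → ℝ → ℝ := fun j τ => E j (Real.arccos (Real.cos τ) / p) with he_def
  have hmem : ∀ τ : ℝ, Real.arccos (Real.cos τ) / p ∈ Set.Icc 0 (π / p) := fun τ =>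
    ⟨div_nonneg (Real.arccos_nonneg _) hp0.le,
      div_le_div_of_nonneg_right (Real.arccos_le_pi _) hp0.le⟩
  have he : ∀ j, Continuous (e j) := fun j =>
    (hcont j).comp_continuous
      ((Real.continuous_arccos.comp Real.continuous_cos).div_const _) hmem
  have heQ : ∀ (τ : ℝ) (z : ℂ), Q.eval z - 2 * Complex.cos τ = ∏ j, (z - e j τ) := by
    intro τ z
    rw [← hprod _ (hmem τ) z]
    have h1 : (p : ℂ) * ((Real.arccos (Real.cos τ) / p : ℝ) : ℂ) = (Real.arccos (Real.cos τ) : ℂ) := by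
      have : (p : ℂ) ≠ 0 := by exact_mod_cast hp0.ne'
      push_cast
      field_simp
    rw [h1, ← Complex.ofReal_cos, ← Complex.ofReal_cos,
      Real.cos_arccos (Real.neg_one_le_cos τ) (Real.cos_le_one τ)]
  have hbdd : ∀ j, ∃ C, ∀ k ∈ Set.Icc 0 (π / p), |E j k| ≤ C := fun j =>
    isCompact_Icc.exists_bound_of_continuousOn (hcont j)
  choose C hC using hbdd
  obtain ⟨M, hM0, hM⟩ : ∃ M : ℝ, 0 ≤ M ∧ ∀ j, ∀ k ∈ Set.Icc 0 (π / p), |E j k| ≤ M := by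
    refine ⟨∑ j, |C j|, Finset.sum_nonneg fun j _ => abs_nonneg _, fun j k hk => ?_⟩
    exact ((hC j k hk).trans (le_abs_self _)).trans
      (Finset.single_le_sum (f := fun j => |C j|) (fun j _ => abs_nonneg _) (Finset.mem_univ j))
  obtain ⟨c, hc, hunif⟩ := exists_uniform_bound hp he heQ (fun j τ => hM j _ (hmem τ)) hM0
  have hpoly : ∀ P : Polynomial ℂ, ∃ C : ℝ, ∀ x ∈ Set.Icc (-M) M, ‖P.eval (x : ℂ)‖ ≤ C := fun P =>
    isCompact_Icc.exists_bound_of_continuousOn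
      (P.continuous.comp Complex.continuous_ofReal).continuousOn
  obtain ⟨C₁, hC₁⟩ := hpoly Q.derivative
  obtain ⟨C₂, hC₂⟩ := hpoly Q.derivative.derivative
  set K : ℝ := max 1 (max C₁ C₂) with hK
  have hK1 : 1 ≤ K := le_max_left _ _
  have hKC₁ : C₁ ≤ K := (le_max_left _ _).trans (le_max_right _ _)
  have hKC₂ : C₂ ≤ K := (le_max_right _ _).trans (le_max_right _ _)
  have hK0 : 0 < K := by linarith
  refine ⟨min (1 / (4 * K)) (c * (1 / (2 * K)) ^ 3 / 9), by positivity, fun j k hk => ?_⟩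
  by_contra! hlt
  have hlt₁ := hlt.trans_le (min_le_left _ _)
  have hlt₂ := hlt.trans_le (min_le_right _ _)
  have hkI : k ∈ Set.Icc 0 (π / p) := Set.Ioo_subset_Icc_self hk
  have hroot : ∀ t ∈ Set.Ioo 0 (π / p), Q.eval (E j t : ℂ) = 2 * Complex.cos ((p : ℝ) * t) := by
    intro t ht
    have h := hprod t (Set.Ioo_subset_Icc_self ht) (E j t)
    rw [Finset.prod_eq_zero (Finset.mem_univ j) (sub_self _)] at h
    simpa using sub_eq_zero.mp h
  obtain ⟨hD1, hD2⟩ := discriminant_deriv_identities isOpen_Ioo (hana j) hroot hk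
  have hsin : 0 < Real.sin (p * k) := by
    refine Real.sin_pos_of_pos_of_lt_pi (mul_pos hp0 hk.1) ?_
    have := (lt_div_iff₀ hp0).mp hk.2
    linarith
  have hEM : |E j k| ≤ M := hM j k hkI
  have hQ1 : ‖Q.derivative.eval (E j k : ℂ)‖ ≤ K := (hC₁ _ (abs_le.mp hEM)).trans hKC₁
  have hQ2 : ‖Q.derivative.derivative.eval (E j k : ℂ)‖ ≤ K := (hC₂ _ (abs_le.mp hEM)).trans hKC₂
  have hd0 : deriv (E j) k ≠ 0 := by
    intro h0
    rw [h0, Complex.ofReal_zero, mul_zero] at hD1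
    have := (Complex.ofReal_eq_zero.mp hD1.symm)
    have h2 : 0 < p * Real.sin (p * k) := by positivity
    linarith
  obtain ⟨σ, hσ, hσd⟩ : ∃ σ : ℝ, σ ^ 2 = 1 ∧ σ * deriv (E j) k = |deriv (E j) k| := by
    rcases le_total 0 (deriv (E j) k) with h | h
    · exact ⟨1, by norm_num, by rw [abs_of_nonneg h, one_mul]⟩
    · exact ⟨-1, by norm_num, by rw [abs_of_nonpos h]; ring⟩
  have hmain := hunif (E j) k σ (hana j k hk) hsin
    (by filter_upwards [isOpen_Ioo.mem_nhds hk] with t ht; simpa using hroot t ht) hEM hσ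
    (by rw [hσd]; exact abs_pos.mpr hd0)
  rw [hσd] at hmain
  set d := |deriv (E j) k| with hd
  set a := |iteratedDeriv 2 (E j) k| with ha
  set b := |iteratedDeriv 3 (E j) k| with hb
  have ha0 : 0 ≤ a := abs_nonneg _
  have hb0 : 0 ≤ b := abs_nonneg _
  have hd0' : 0 ≤ d := abs_nonneg _
  have hKinv : 1 / (4 * K) ≤ 1 / 4 := by
    apply one_div_le_one_div_of_le <;> linarith
  -- Where `|E'|` is not small, the key estimate applies. Where it is small, the identities for
  -- `Q'(E) E'` and `Q''(E) E'² + Q'(E) E''` would force both `sin (p k)` and `cos (p k)` to be small.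
  rcases le_or_gt (1 / (2 * K)) d with hcase | hcase
  · have h1 : c * (1 / (2 * K)) ^ 3 ≤ c * d ^ 3 :=
      mul_le_mul_of_nonneg_left (pow_le_pow_left₀ (by positivity) hcase 3) hc.le
    have h2 : iteratedDeriv 2 (E j) k ^ 2 ≤ a := by
      rw [← sq_abs]
      nlinarith
    have h3 : 0 < c * (1 / (2 * K)) ^ 3 := by positivity
    linarith
  · have hN1 := congrArg norm hD1
    rw [norm_mul, Complex.norm_real, Complex.norm_real, Real.norm_eq_abs, Real.norm_eq_abs, ← hd,
      abs_mul, abs_mul, abs_of_pos hp0] at hN1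
    have hN2 : |-2 * (p : ℝ) ^ 2 * Real.cos (p * k)| ≤ K * d ^ 2 + K * a := by
      have h := congrArg norm hD2
      rw [Complex.norm_real, Real.norm_eq_abs] at h
      rw [← h]
      refine (norm_add_le _ _).trans ?_
      rw [norm_mul, norm_mul, norm_pow, Complex.norm_real, Complex.norm_real, Real.norm_eq_abs,
        Real.norm_eq_abs, ← hd, ← ha]
      gcongr
    rw [abs_mul, abs_mul, abs_of_pos (pow_pos hp0 2)] at hN2
    have hKd : K * d < 1 / 2 := by
      have := mul_lt_mul_of_pos_left hcase hK0
      calc K * d < K * (1 / (2 * K)) := this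
        _ = 1 / 2 := by field_simp
    have hKa : K * a < 1 / 4 := by
      have := mul_lt_mul_of_pos_left (lt_of_le_of_lt (by linarith : a ≤ a + b) hlt₁) hK0
      calc K * a < K * (1 / (4 * K)) := this
        _ = 1 / 4 := by field_simp
    have hKd2 : K * d ^ 2 ≤ 1 / 4 := by
      have : d ≤ 1 / 2 := by nlinarith
      nlinarith
    have hs : |Real.sin (p * k)| ≤ 1 / 4 := by
      have h1 : 1 * |Real.sin (p * k)| ≤ p * |Real.sin (p * k)| :=
        mul_le_mul_of_nonneg_right hp1 (abs_nonneg _)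
      have h2 : ‖Q.derivative.eval (E j k : ℂ)‖ * d ≤ K * d := mul_le_mul_of_nonneg_right hQ1 hd0'
      norm_num at hN1
      linarith
    have hcs : |Real.cos (p * k)| ≤ 1 / 4 := by
      have h1 : 1 * |Real.cos (p * k)| ≤ p ^ 2 * |Real.cos (p * k)| :=
        mul_le_mul_of_nonneg_right (one_le_pow₀ hp1) (abs_nonneg _)
      norm_num at hN2
      linarith
    have h1 := Real.sin_sq_add_cos_sq (p * k)
    rw [← sq_abs, ← sq_abs (Real.cos _)] at h1
    nlinarith [abs_nonneg (Real.sin (p * k)), abs_nonneg (Real.cos (p * k))]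
end

section
/- Let k ≥ 2 be an integer, let a < b be real, and let δ > 0. Suppose φ : (a, b) → ℝ is k times continuously differentiable with |φ^{(k)}(x)| ≥ δ for all x ∈ (a, b); suppose η : (a, b) → ℝ is twice differentiable with η''(x) = 0 for all x ∈ (a, b); and suppose ψ : [a, b] → ℂ is continuous on [a, b] and continuously differentiable on (a, b) with ψ' integrable on (a, b). Then for every real λ ≠ 0, | ∫_a^b e^{i(λφ(x) + η(x))} ψ(x) dx | ≤ C_k δ^{−1/k} ( |ψ(a)| + ∫_a^b |ψ'(x)| dx ) |λ|^{−1/k}, where C_k := 5·2^{k−1} − 2. -/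
/-!
Put `f = λ φ + η`. As `k ≥ 2` and `η'' = 0`, the `k`-th derivative of `f` is `λ φ^{(k)}`, which is
continuous and bounded below by `μ = |λ| δ` in absolute value, hence of constant sign.

On compact subintervals of `(a, b)` the integral of `e^{if}` is bounded by `C_k μ^{-1/k}`
(`norm_integral_exp_le_of_kth_deriv`), by induction on `k`. If `|f^{(k+1)}| ≥ μ`, then `f^{(k)}` is
monotone and satisfies `|f^{(k)}| ≥ μ τ` outside an interval of length `2 τ`
(`norm_integral_le_of_split`); the two outer pieces fall under the bound for `k`, the middle piece
contributes at most `2 τ`, and `τ = μ^{-1/(k+1)}` yields `C_{k+1} = 2 C_k + 2`. The induction starts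
from the first-derivative estimate with `C_1 = 3` (`norm_integral_exp_le_of_first_deriv`).

The bounds extend to the closed interval by continuity of the primitive of `e^{if}`. Integrating by
parts against the primitive that vanishes at `b` brings in `ψ` and leaves only the boundary term at
`a` (`norm_integral_mul_le_of_forall_norm_integral_le`).
-/

open scoped ENNReal
open MeasureTheory intervalIntegral

/-- First-derivative estimate: a phase with `|f'| ≥ ν` and monotone derivative gives a bound `3 / ν`.
The boundary terms of the integration by parts cost `2 / ν` and the total variation of `1 / f'`
costs `1 / ν`. -/
lemma norm_integral_exp_le_of_first_deriv {c d ν : ℝ} (hcd : c ≤ d) (hν : 0 < ν)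
    {f f₁ f₂ : ℝ → ℝ}
    (hf : ∀ x ∈ Set.Icc c d, HasDerivAt f (f₁ x) x)
    (hf₁ : ∀ x ∈ Set.Icc c d, HasDerivAt f₁ (f₂ x) x)
    (hf₂ : ContinuousOn f₂ (Set.Icc c d))
    (hsign : (∀ x ∈ Set.Icc c d, 0 ≤ f₂ x) ∨ (∀ x ∈ Set.Icc c d, f₂ x ≤ 0))
    (hlow : (∀ x ∈ Set.Icc c d, ν ≤ f₁ x) ∨ (∀ x ∈ Set.Icc c d, f₁ x ≤ -ν)) :
    ‖∫ x in c..d, Complex.exp (Complex.I * (f x : ℂ))‖ ≤ 3 / ν := by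
  have hfc : ContinuousOn f (Set.Icc c d) := fun x hx => (hf x hx).continuousAt.continuousWithinAt
  have hfc₁ : ContinuousOn f₁ (Set.Icc c d) :=
    fun x hx => (hf₁ x hx).continuousAt.continuousWithinAt
  have habs : ∀ x ∈ Set.Icc c d, ν ≤ |f₁ x| := by
    intro x hx
    rcases hlow with h | h
    · exact (h x hx).trans (le_abs_self _)
    · exact (by linarith [h x hx] : ν ≤ -f₁ x).trans (neg_le_abs _)
  have hne : ∀ x ∈ Set.Icc c d, f₁ x ≠ 0 := fun x hx h0 => by
    have := habs x hx
    rw [h0, abs_zero] at this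
    linarith
  have hcI : c ∈ Set.Icc c d := ⟨le_rfl, hcd⟩
  have hdI : d ∈ Set.Icc c d := ⟨hcd, le_rfl⟩
  have huI : Set.uIcc c d = Set.Icc c d := Set.uIcc_of_le hcd
  set E : ℝ → ℂ := fun x => Complex.exp (Complex.I * (f x : ℂ)) with hE
  have hEn : ∀ x, ‖E x‖ = 1 := fun x => by
    rw [hE]; simp only [mul_comm Complex.I]; exact Complex.norm_exp_ofReal_mul_I _
  have hEc : ContinuousOn E (Set.Icc c d) := by
    simp only [hE]; fun_prop
  have hq : ContinuousOn (fun x => f₂ x / f₁ x ^ 2) (Set.Icc c d) :=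
    hf₂.div (hfc₁.pow 2) fun x hx => pow_ne_zero 2 (hne x hx)
  have hqC : ContinuousOn (fun x => E x * (Complex.I * ((f₂ x / f₁ x ^ 2 : ℝ) : ℂ)))
      (Set.Icc c d) :=
    hEc.mul (continuousOn_const.mul (Complex.continuous_ofReal.comp_continuousOn hq))
  have hder : ∀ x ∈ Set.uIcc c d,
      HasDerivAt (fun x => E x * (-Complex.I * (((f₁ x)⁻¹ : ℝ) : ℂ)))
        (E x + E x * (Complex.I * ((f₂ x / f₁ x ^ 2 : ℝ) : ℂ))) x := by
    intro x hx
    rw [huI] at hx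
    have h1 : HasDerivAt E (E x * (Complex.I * (f₁ x : ℂ))) x :=
      (((hf x hx).ofReal_comp).const_mul Complex.I).cexp
    have h2 := (((hf₁ x hx).inv (hne x hx)).ofReal_comp).const_mul (-Complex.I)
    have h3 := h1.mul h2
    refine h3.congr_deriv ?_
    have : (f₁ x : ℂ) ≠ 0 := by exact_mod_cast hne x hx
    simp only [Pi.inv_apply]
    push_cast
    field_simp
    linear_combination (-E x * (f₁ x : ℂ) ^ 2) * Complex.I_sq
  have hint1 : IntervalIntegrable E volume c d :=
    ContinuousOn.intervalIntegrable (huI ▸ hEc)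
  have hint2 : IntervalIntegrable (fun x => E x * (Complex.I * ((f₂ x / f₁ x ^ 2 : ℝ) : ℂ)))
      volume c d := ContinuousOn.intervalIntegrable (huI ▸ hqC)
  have hftc := integral_eq_sub_of_hasDerivAt hder (hint1.add hint2)
  rw [integral_add hint1 hint2] at hftc
  have hqint : IntervalIntegrable (fun x => f₂ x / f₁ x ^ 2) volume c d :=
    ContinuousOn.intervalIntegrable (huI ▸ hq)
  have hftc2 : ∫ x in c..d, f₂ x / f₁ x ^ 2 = (f₁ c)⁻¹ - (f₁ d)⁻¹ := by
    have := integral_eq_sub_of_hasDerivAt (f := fun x => -(f₁ x)⁻¹)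
      (f' := fun x => f₂ x / f₁ x ^ 2) (a := c) (b := d) (fun x hx => by
        rw [huI] at hx
        exact ((hf₁ x hx).inv (hne x hx)).neg.congr_deriv (by ring)) hqint
    rw [this]; ring
  have hinv : ∀ x ∈ Set.Icc c d, |(f₁ x)⁻¹| ≤ 1 / ν := fun x hx => by
    rw [abs_inv, ← one_div]; exact one_div_le_one_div_of_le hν (habs x hx)
  have hvar : |(f₁ c)⁻¹ - (f₁ d)⁻¹| ≤ 1 / ν := by
    have hc := abs_le.1 (hinv c hcI)
    have hd := abs_le.1 (hinv d hdI)
    rw [abs_le]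
    rcases hlow with h | h
    · have h1 : 0 ≤ (f₁ c)⁻¹ := inv_nonneg.2 (hν.le.trans (h c hcI))
      have h2 : 0 ≤ (f₁ d)⁻¹ := inv_nonneg.2 (hν.le.trans (h d hdI))
      constructor <;> linarith
    · have h1 : (f₁ c)⁻¹ ≤ 0 := inv_nonpos.2 (by linarith [h c hcI])
      have h2 : (f₁ d)⁻¹ ≤ 0 := inv_nonpos.2 (by linarith [h d hdI])
      constructor <;> linarith
  have hrem : ‖∫ x in c..d, E x * (Complex.I * ((f₂ x / f₁ x ^ 2 : ℝ) : ℂ))‖ ≤ 1 / ν := by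
    have hle : ‖∫ x in c..d, E x * (Complex.I * ((f₂ x / f₁ x ^ 2 : ℝ) : ℂ))‖
        ≤ ∫ x in c..d, |f₂ x / f₁ x ^ 2| := by
      refine (intervalIntegral.norm_integral_le_integral_norm hcd).trans (le_of_eq ?_)
      refine integral_congr fun x _ => ?_
      simp only [norm_mul, hEn, Complex.norm_I, Complex.norm_real, Real.norm_eq_abs, one_mul]
    refine hle.trans ?_
    rcases hsign with h | h
    · have : ∫ x in c..d, |f₂ x / f₁ x ^ 2| = ∫ x in c..d, f₂ x / f₁ x ^ 2 :=
        integral_congr fun x hx => abs_of_nonneg (div_nonneg (h x (huI ▸ hx)) (sq_nonneg _))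
      rw [this, hftc2]
      exact (le_abs_self _).trans hvar
    · have : ∫ x in c..d, |f₂ x / f₁ x ^ 2| = ∫ x in c..d, -(f₂ x / f₁ x ^ 2) :=
        integral_congr fun x hx =>
          abs_of_nonpos (div_nonpos_of_nonpos_of_nonneg (h x (huI ▸ hx)) (sq_nonneg _))
      rw [this, intervalIntegral.integral_neg, hftc2]
      exact (neg_le_abs _).trans hvar
  have hbd : ∀ x ∈ Set.Icc c d, ‖E x * (-Complex.I * (((f₁ x)⁻¹ : ℝ) : ℂ))‖ ≤ 1 / ν := by
    intro x hx
    simp only [norm_mul, hEn, norm_neg, Complex.norm_I, Complex.norm_real, Real.norm_eq_abs,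
      one_mul]
    exact hinv x hx
  rw [eq_sub_of_add_eq hftc]
  refine (norm_sub_le _ _).trans ?_
  have h1 := norm_sub_le (E d * (-Complex.I * (((f₁ d)⁻¹ : ℝ) : ℂ)))
    (E c * (-Complex.I * (((f₁ c)⁻¹ : ℝ) : ℂ)))
  have h2 := hbd d hdI
  have h3 := hbd c hcI
  have h4 : 3 / ν = 1 / ν + 1 / ν + 1 / ν := by ring
  linarith

/-- A function with derivative at least `μ` has a point `z` away from which it grows with slope at
least `μ`; `z` is an endpoint or a zero. The inequalities are strict in `x` because the value at an
endpoint `z` need not vanish. -/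
lemma exists_linear_escape {c d μ : ℝ} (hcd : c ≤ d) {G G' : ℝ → ℝ}
    (hG : ∀ x ∈ Set.Icc c d, HasDerivAt G (G' x) x) (hG' : ∀ x ∈ Set.Icc c d, μ ≤ G' x) :
    ∃ z ∈ Set.Icc c d, (∀ x ∈ Set.Icc c d, x < z → G x ≤ μ * (x - z)) ∧
      (∀ x ∈ Set.Icc c d, z < x → μ * (x - z) ≤ G x) := by
  have hGc : ContinuousOn G (Set.Icc c d) := fun x hx => (hG x hx).continuousAt.continuousWithinAt
  have hgrow : ∀ x ∈ Set.Icc c d, ∀ y ∈ Set.Icc c d, x ≤ y → μ * (y - x) ≤ G y - G x := by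
    refine (convex_Icc c d).mul_sub_le_image_sub_of_le_deriv hGc ?_ ?_
    · intro x hx
      exact (hG x (interior_subset hx)).differentiableAt.differentiableWithinAt
    · intro x hx
      rw [(hG x (interior_subset hx)).deriv]
      exact hG' x (interior_subset hx)
  have hcI : c ∈ Set.Icc c d := ⟨le_rfl, hcd⟩
  have hdI : d ∈ Set.Icc c d := ⟨hcd, le_rfl⟩
  rcases le_or_gt 0 (G c) with h | h
  · refine ⟨c, hcI, fun x hx hxc => absurd hx.1 (not_le.2 hxc), fun x hx hxc => ?_⟩
    linarith [hgrow c hcI x hx hxc.le]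
  rcases le_or_gt (G d) 0 with h' | h'
  · refine ⟨d, hdI, fun x hx hxd => ?_, fun x hx hxd => absurd hx.2 (not_le.2 hxd)⟩
    linarith [hgrow x hx d hdI hxd.le]
  obtain ⟨z, hz, hz0⟩ := intermediate_value_Icc hcd hGc ⟨h.le, h'.le⟩
  refine ⟨z, hz, fun x hx hxz => ?_, fun x hx hxz => ?_⟩
  · linarith [hgrow x hx z hz hxz.le]
  · linarith [hgrow z hz x hx hxz.le]

/-- Removing the points within `τ` of the escape point leaves two intervals on which
`|G| ≥ μ τ`, and each of them contributes at most `B`. -/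
lemma norm_integral_le_of_split_pos {c d μ τ B : ℝ} (hcd : c ≤ d) (hμ : 0 < μ) (hτ : 0 < τ)
    (hB : 0 ≤ B) {E : ℝ → ℂ} (hE : ∀ x, ‖E x‖ ≤ 1) (hEi : IntervalIntegrable E volume c d)
    {G G' : ℝ → ℝ}
    (hG : ∀ x ∈ Set.Icc c d, HasDerivAt G (G' x) x) (hG' : ∀ x ∈ Set.Icc c d, μ ≤ G' x)
    (hsub : ∀ p q, c ≤ p → p ≤ q → q ≤ d →
      ((∀ x ∈ Set.Icc p q, μ * τ ≤ G x) ∨ (∀ x ∈ Set.Icc p q, G x ≤ -(μ * τ))) →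
      ‖∫ x in p..q, E x‖ ≤ B) :
    ‖∫ x in c..d, E x‖ ≤ 2 * B + 2 * τ := by
  obtain ⟨z, hz, hzl, hzr⟩ := exists_linear_escape hcd hG hG'
  set p := max c (z - τ) with hp
  set q := min d (z + τ) with hq
  have hcp : c ≤ p := le_max_left _ _
  have hqd : q ≤ d := min_le_left _ _
  have hpz : p ≤ z := max_le hz.1 (by linarith)
  have hzq : z ≤ q := le_min hz.2 (by linarith)
  have hpl : z - τ ≤ p := le_max_right _ _
  have hqr : q ≤ z + τ := min_le_right _ _
  have hint : ∀ u v, c ≤ u → u ≤ v → v ≤ d → IntervalIntegrable E volume u v := by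
    intro u v h1 h2 h3
    refine hEi.mono_set ?_
    rw [Set.uIcc_of_le h2, Set.uIcc_of_le hcd]
    exact Set.Icc_subset_Icc h1 h3
  have hleft : ‖∫ x in c..p, E x‖ ≤ B := by
    rcases le_total (z - τ) c with h | h
    · rw [hp, max_eq_left h, integral_same, norm_zero]; exact hB
    · have hpe : p = z - τ := max_eq_right h
      refine hsub c p le_rfl hcp (by linarith) (Or.inr fun x hx => ?_)
      have := hzl x ⟨hx.1, by linarith [hx.2]⟩ (by linarith [hx.2])
      nlinarith [mul_le_mul_of_nonneg_left (show x - z ≤ -τ by linarith [hx.2]) hμ.le]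
  have hright : ‖∫ x in q..d, E x‖ ≤ B := by
    rcases le_total d (z + τ) with h | h
    · rw [hq, min_eq_left h, integral_same, norm_zero]; exact hB
    · have hqe : q = z + τ := min_eq_right h
      refine hsub q d (by linarith) hqd le_rfl (Or.inl fun x hx => ?_)
      have := hzr x ⟨by linarith [hx.1], hx.2⟩ (by linarith [hx.1])
      nlinarith [mul_le_mul_of_nonneg_left (show τ ≤ x - z by linarith [hx.1]) hμ.le]
  have hmid : ‖∫ x in p..q, E x‖ ≤ 2 * τ := by
    have h := norm_integral_le_of_norm_le_const (a := p) (b := q) (fun x _ => hE x)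
    rw [abs_of_nonneg (by linarith), one_mul] at h
    linarith
  have h1 := integral_add_adjacent_intervals (hint c p le_rfl hcp (by linarith))
    (hint p q hcp (by linarith) hqd)
  have h2 := integral_add_adjacent_intervals (hint c q le_rfl (by linarith) hqd)
    (hint q d (by linarith) hqd le_rfl)
  rw [← h2, ← h1]
  have h3 := norm_add₃_le (a := ∫ x in c..p, E x) (b := ∫ x in p..q, E x)
    (c := ∫ x in q..d, E x)
  linarith

lemma norm_integral_le_of_split {c d μ τ B : ℝ} (hcd : c ≤ d) (hμ : 0 < μ) (hτ : 0 < τ)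
    (hB : 0 ≤ B) {E : ℝ → ℂ} (hE : ∀ x, ‖E x‖ ≤ 1) (hEi : IntervalIntegrable E volume c d)
    {G G' : ℝ → ℝ}
    (hG : ∀ x ∈ Set.Icc c d, HasDerivAt G (G' x) x)
    (hG' : (∀ x ∈ Set.Icc c d, μ ≤ G' x) ∨ (∀ x ∈ Set.Icc c d, G' x ≤ -μ))
    (hsub : ∀ p q, c ≤ p → p ≤ q → q ≤ d →
      ((∀ x ∈ Set.Icc p q, μ * τ ≤ G x) ∨ (∀ x ∈ Set.Icc p q, G x ≤ -(μ * τ))) →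
      ‖∫ x in p..q, E x‖ ≤ B) :
    ‖∫ x in c..d, E x‖ ≤ 2 * B + 2 * τ := by
  rcases hG' with h | h
  · exact norm_integral_le_of_split_pos hcd hμ hτ hB hE hEi hG h hsub
  · refine norm_integral_le_of_split_pos hcd hμ hτ hB hE hEi (G := fun x => -G x)
      (G' := fun x => -G' x) (fun x hx => (hG x hx).neg) (fun x hx => by linarith [h x hx]) ?_
    intro p q h1 h2 h3 h4
    refine hsub p q h1 h2 h3 ?_
    rcases h4 with h4 | h4
    · exact Or.inr fun x hx => by linarith [h4 x hx]
    · exact Or.inl fun x hx => by linarith [h4 x hx]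

/-- Van der Corput's estimate with amplitude `1` on a compact subinterval, where `F j` is the
`j`-th derivative of the phase `F 0`. The constants satisfy `C₁ = 3`, `C_{k+1} = 2 C_k + 2`. -/
lemma norm_integral_exp_le_of_kth_deriv {a b : ℝ} {K : ℕ} (hK : 2 ≤ K) {F : ℕ → ℝ → ℝ}
    (hF : ∀ j < K, ∀ x ∈ Set.Ioo a b, HasDerivAt (F j) (F (j + 1) x) x)
    (hFK : ContinuousOn (F K) (Set.Ioo a b)) (k : ℕ) (hk : 2 ≤ k) :
    k ≤ K → ∀ c d μ : ℝ, a < c → c ≤ d → d < b → 0 < μ →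
      ((∀ x ∈ Set.Icc c d, μ ≤ F k x) ∨ (∀ x ∈ Set.Icc c d, F k x ≤ -μ)) →
      ‖∫ x in c..d, Complex.exp (Complex.I * (F 0 x : ℂ))‖
        ≤ (5 * 2 ^ (k - 1) - 2 : ℝ) * μ ^ (-(1 / (k : ℝ))) := by
  have hFc : ∀ j ≤ K, ContinuousOn (F j) (Set.Ioo a b) := by
    intro j hj
    rcases hj.lt_or_eq with h | rfl
    · exact fun x hx => (hF j h x hx).continuousAt.continuousWithinAt
    · exact hFK
  have hEn : ∀ x, ‖Complex.exp (Complex.I * (F 0 x : ℂ))‖ ≤ 1 := fun x => by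
    rw [mul_comm Complex.I]; exact (Complex.norm_exp_ofReal_mul_I _).le
  have hEi : ∀ c d : ℝ, a < c → c ≤ d → d < b →
      IntervalIntegrable (fun x => Complex.exp (Complex.I * (F 0 x : ℂ))) volume c d := by
    intro c d hc hcd hd
    apply ContinuousOn.intervalIntegrable
    rw [Set.uIcc_of_le hcd]
    have := (hFc 0 (Nat.zero_le _)).mono (Set.Icc_subset_Ioo hc hd)
    fun_prop
  induction k, hk using Nat.le_induction with
  | base =>
    intro _ c d μ hc hcd hd hμ hlow
    have hsubI := Set.Icc_subset_Ioo hc hd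
    have hτ : 0 < μ ^ (-(1 / (2 : ℝ))) := Real.rpow_pos_of_pos hμ _
    -- The choice `τ = μ ^ (-1/2)` balances `3 / (μ τ)` against `τ`.
    have hbal : 3 / (μ * μ ^ (-(1 / (2 : ℝ)))) = 3 * μ ^ (-(1 / (2 : ℝ))) := by
      have h1 : μ * μ ^ (-(1 / (2 : ℝ))) = μ ^ (1 / (2 : ℝ)) := by
        nth_rewrite 1 [← Real.rpow_one μ]
        rw [← Real.rpow_add hμ]; norm_num
      rw [h1, Real.rpow_neg hμ.le, div_eq_mul_inv]
    have key := norm_integral_le_of_split (B := 3 / (μ * μ ^ (-(1 / (2 : ℝ))))) hcd hμ hτ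
      (by positivity) hEn (hEi c d hc hcd hd)
      (fun x hx => hF 1 (by omega) x (hsubI hx)) hlow ?_
    · rw [hbal] at key
      refine key.trans (le_of_eq ?_)
      norm_num
      ring
    · intro p q h1 h2 h3 h4
      have hpq : Set.Icc p q ⊆ Set.Icc c d := Set.Icc_subset_Icc h1 h3
      refine norm_integral_exp_le_of_first_deriv h2 (mul_pos hμ hτ)
        (fun x hx => hF 0 (by omega) x (hsubI (hpq hx)))
        (fun x hx => hF 1 (by omega) x (hsubI (hpq hx)))
        ((hFc 2 hK).mono (hpq.trans hsubI)) ?_ h4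
      rcases hlow with h | h
      · exact Or.inl fun x hx => hμ.le.trans (h x (hpq hx))
      · exact Or.inr fun x hx => by linarith [h x (hpq hx)]
  | succ k hk ih =>
    intro hkK c d μ hc hcd hd hμ hlow
    have hsubI := Set.Icc_subset_Ioo hc hd
    have hk0 : (k : ℝ) ≠ 0 := by
      have : k ≠ 0 := by omega
      exact_mod_cast this
    have hk1 : (k : ℝ) + 1 ≠ 0 := by positivity
    set τ : ℝ := μ ^ (-(1 / ((k + 1 : ℕ) : ℝ))) with hτdef
    have hτ : 0 < τ := Real.rpow_pos_of_pos hμ _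
    -- The choice `τ = μ ^ (-1/(k+1))` makes `(μ τ) ^ (-1/k)` equal to `τ`.
    have hbal : (μ * τ) ^ (-(1 / (k : ℝ))) = τ := by
      have h1 : μ * τ = μ ^ (1 + -(1 / ((k + 1 : ℕ) : ℝ))) := by
        rw [Real.rpow_add hμ, Real.rpow_one]
      rw [h1, ← Real.rpow_mul hμ.le, hτdef]
      congr 1
      push_cast
      field_simp
      ring
    have hpow : (2 : ℝ) ^ (k + 1 - 1) = 2 * 2 ^ (k - 1) := by
      rw [← pow_succ']; congr 1; omega
    have hone : (1 : ℝ) ≤ 2 ^ (k - 1) := one_le_pow₀ (by norm_num)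
    have key := norm_integral_le_of_split (B := (5 * 2 ^ (k - 1) - 2 : ℝ) * τ) hcd hμ hτ
      (mul_nonneg (by linarith) hτ.le) hEn (hEi c d hc hcd hd)
      (fun x hx => hF k (by omega) x (hsubI hx)) hlow ?_
    · rw [hpow]
      linarith
    · intro p q h1 h2 h3 h4
      have := ih (by omega) p q (μ * τ) (by linarith) h2 (by linarith) (mul_pos hμ hτ) h4
      rwa [hbal] at this

/-- Uniform bounds on the integrals of `E` over compact subintervals of `(a, b)` transfer to an
amplitude `ψ`, by integrating by parts against the primitive of `E` that vanishes at `b`. -/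
lemma norm_integral_mul_le_of_forall_norm_integral_le {a b M : ℝ} (hab : a < b)
    {E ψ : ℝ → ℂ} (hE : ∀ x, ‖E x‖ ≤ 1) (hEc : ContinuousOn E (Set.Ioo a b))
    (hM : ∀ c d, a < c → c ≤ d → d < b → ‖∫ x in c..d, E x‖ ≤ M)
    (hψc : ContinuousOn ψ (Set.Icc a b))
    (hψd : ∀ x ∈ Set.Ioo a b, DifferentiableAt ℝ ψ x)
    (hψint : IntegrableOn (deriv ψ) (Set.Ioo a b)) :
    ‖∫ x in a..b, E x * ψ x‖ ≤ M * (‖ψ a‖ + ∫ x in a..b, ‖deriv ψ x‖) := by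
  have hEm : AEStronglyMeasurable E (volume.restrict (Set.Ioo a b)) :=
    hEc.aestronglyMeasurable measurableSet_Ioo
  have hEio : IntegrableOn E (Set.Ioo a b) :=
    Integrable.of_bound hEm 1 (Filter.Eventually.of_forall hE)
  have hEI : IntegrableOn E (Set.Icc a b) := by
    rwa [integrableOn_Icc_iff_integrableOn_Ioo]
  have hEint : IntervalIntegrable E volume a b :=
    (intervalIntegrable_iff_integrableOn_Ioo_of_le hab.le).2 hEio
  have hψI : IntervalIntegrable (deriv ψ) volume a b :=
    (intervalIntegrable_iff_integrableOn_Ioo_of_le hab.le).2 hψint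
  have huI : Set.uIcc a b = Set.Icc a b := Set.uIcc_of_le hab.le
  have hsubint : ∀ c ∈ Set.Icc a b, ∀ d ∈ Set.Icc a b, IntervalIntegrable E volume c d :=
    fun c hc d hd => hEint.mono_set (by
      rw [huI]; exact Set.uIcc_subset_Icc hc hd)
  have haI : a ∈ Set.Icc a b := ⟨le_rfl, hab.le⟩
  have hbI : b ∈ Set.Icc a b := ⟨hab.le, le_rfl⟩
  set P : ℝ → ℂ := fun x => ∫ t in a..x, E t with hP
  have hPc : ContinuousOn P (Set.Icc a b) := by
    have := continuousOn_primitive_interval (a := a) (b := b) (f := E) (μ := volume)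
      (by rw [huI]; exact hEI)
    rwa [huI] at this
  have hdiff : ∀ c ∈ Set.Icc a b, ∀ d ∈ Set.Icc a b, P d - P c = ∫ t in c..d, E t :=
    fun c hc d hd => integral_interval_sub_left (hsubint a haI d hd) (hsubint a haI c hc)
  have hclos : closure (Set.Ioo a b) = Set.Icc a b := closure_Ioo hab.ne
  have hb1 : ∀ c ∈ Set.Ioo a b, ∀ d ∈ Set.Ioo a b, ‖P d - P c‖ ≤ M := by
    intro c hc d hd
    rcases le_total c d with h | h
    · rw [hdiff c (Set.Ioo_subset_Icc_self hc) d (Set.Ioo_subset_Icc_self hd)]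
      exact hM c d hc.1 h hd.2
    · rw [norm_sub_rev, hdiff d (Set.Ioo_subset_Icc_self hd) c (Set.Ioo_subset_Icc_self hc)]
      exact hM d c hd.1 h hc.2
  have hb2 : ∀ c ∈ Set.Ioo a b, ∀ d ∈ Set.Icc a b, ‖P d - P c‖ ≤ M := by
    intro c hc d hd
    refine le_on_closure (s := Set.Ioo a b) (f := fun d => ‖P d - P c‖) (g := fun _ => M)
      (fun d hd => hb1 c hc d hd) ?_ continuousOn_const (by rwa [hclos])
    rw [hclos]; fun_prop
  have hb3 : ∀ c ∈ Set.Icc a b, ∀ d ∈ Set.Icc a b, ‖P d - P c‖ ≤ M := by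
    intro c hc d hd
    refine le_on_closure (s := Set.Ioo a b) (f := fun c => ‖P d - P c‖) (g := fun _ => M)
      (fun c hc => hb2 c hc d hd) ?_ continuousOn_const (by rwa [hclos])
    rw [hclos]; fun_prop
  have hM0 : 0 ≤ M := (norm_nonneg _).trans (hb3 a haI a haI)
  have hGc : ContinuousOn (fun x => P x - P b) (Set.Icc a b) := hPc.sub continuousOn_const
  have hder : ∀ x ∈ Set.Ioo a b,
      HasDerivAt (fun x => (P x - P b) * ψ x) (E x * ψ x + (P x - P b) * deriv ψ x) x := by
    intro x hx
    have hnhds : Set.Ioo a b ∈ nhds x := isOpen_Ioo.mem_nhds hx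
    have h1 : HasDerivAt P (E x) x :=
      integral_hasDerivAt_right (hsubint a haI x (Set.Ioo_subset_Icc_self hx))
        ⟨Set.Ioo a b, hnhds, hEm⟩ (hEc.continuousAt hnhds)
    exact (h1.sub_const (P b)).mul (hψd x hx).hasDerivAt
  have hi1 : IntervalIntegrable (fun x => E x * ψ x) volume a b :=
    hEint.mul_continuousOn (by rwa [huI])
  have hi2 : IntervalIntegrable (fun x => (P x - P b) * deriv ψ x) volume a b :=
    hψI.continuousOn_mul (by rwa [huI])
  have hftc := integral_eq_sub_of_hasDerivAt_of_le hab.le (hGc.mul hψc) hder (hi1.add hi2)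
  rw [integral_add hi1 hi2] at hftc
  have hrem : ‖∫ x in a..b, (P x - P b) * deriv ψ x‖ ≤ M * ∫ x in a..b, ‖deriv ψ x‖ := by
    rw [← intervalIntegral.integral_const_mul]
    refine (intervalIntegral.norm_integral_le_integral_norm hab.le).trans ?_
    refine integral_mono_on hab.le hi2.norm (hψI.norm.const_mul M) fun x hx => ?_
    rw [norm_mul]
    exact mul_le_mul_of_nonneg_right (hb3 b hbI x hx) (norm_nonneg _)
  have hbd : ‖(P a - P b) * ψ a‖ ≤ M * ‖ψ a‖ := by
    rw [norm_mul]
    exact mul_le_mul_of_nonneg_right (hb3 b hbI a haI) (norm_nonneg _)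
  have heq : ∫ x in a..b, E x * ψ x
      = -((P a - P b) * ψ a) - ∫ x in a..b, (P x - P b) * deriv ψ x := by
    rw [eq_sub_of_add_eq hftc]; simp
  rw [heq]
  refine (norm_sub_le _ _).trans ?_
  rw [norm_neg]
  linarith

/-- **Modified van der Corput lemma (Lemma A.1).**
If `|φ^{(k)}| ≥ δ` on `(a,b)` for some `k ≥ 2`, `η'' ≡ 0` on `(a,b)`, and `ψ` is `C¹` on
`(a,b)` and continuous on `[a,b]` with integrable derivative, then for `λ ≠ 0`,
`|∫_a^b e^{i(λφ + η)} ψ| ≤ C_k δ^{-1/k} (|ψ(a)| + ∫_a^b |ψ'|) |λ|^{-1/k}`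
with `C_k = 5·2^{k-1} - 2`. -/
theorem van_der_corput_affine_phase
    (k : ℕ) (hk : 2 ≤ k) (a b : ℝ) (hab : a < b) (δ : ℝ) (hδ : 0 < δ)
    (φ : ℝ → ℝ) (hφ : ContDiffOn ℝ k φ (Set.Ioo a b))
    (hφk : ∀ x ∈ Set.Ioo a b, δ ≤ |iteratedDerivWithin k φ (Set.Ioo a b) x|)
    (η : ℝ → ℝ)
    (hη1 : ∀ x ∈ Set.Ioo a b, DifferentiableAt ℝ η x)
    (hη2 : ∀ x ∈ Set.Ioo a b, HasDerivAt (deriv η) 0 x)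
    (ψ : ℝ → ℂ)
    (hψc : ContinuousOn ψ (Set.Icc a b))
    (hψd : ∀ x ∈ Set.Ioo a b, DifferentiableAt ℝ ψ x)
    (hψd' : ContinuousOn (deriv ψ) (Set.Ioo a b))
    (hψint : IntegrableOn (deriv ψ) (Set.Ioo a b)) :
    ∀ l : ℝ, l ≠ 0 →
      ‖∫ x in a..b, Complex.exp (Complex.I * ((l * φ x + η x : ℝ) : ℂ)) * ψ x‖
        ≤ (5 * 2 ^ (k - 1) - 2 : ℝ) * δ ^ (-(1 / (k : ℝ)))
            * (‖ψ a‖ + ∫ x in a..b, ‖deriv ψ x‖) * |l| ^ (-(1 / (k : ℝ))) := by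
  intro l hl
  have hlpos : 0 < |l| := abs_pos.2 hl
  have hkpos : 0 < k := by omega
  have hu : UniqueDiffOn ℝ (Set.Ioo a b) := isOpen_Ioo.uniqueDiffOn
  -- The derivatives of the full phase: `η` contributes only to the orders `0` and `1`.
  let H : ℕ → ℝ → ℝ := fun j => match j with
    | 0 => η
    | 1 => deriv η
    | _ + 2 => fun _ => 0
  let F : ℕ → ℝ → ℝ := fun j x => l * iteratedDerivWithin j φ (Set.Ioo a b) x + H j x
  have hH : ∀ j, ∀ x ∈ Set.Ioo a b, HasDerivAt (H j) (H (j + 1) x) x := by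
    intro j x hx
    match j with
    | 0 => exact (hη1 x hx).hasDerivAt
    | 1 => exact hη2 x hx
    | j + 2 => exact hasDerivAt_const x (0 : ℝ)
  have hHk : ∀ j, 2 ≤ j → ∀ x, H j x = 0 := by
    intro j hj x
    obtain ⟨m, rfl⟩ := Nat.exists_eq_add_of_le' hj
    rfl
  have hF : ∀ j < k, ∀ x ∈ Set.Ioo a b, HasDerivAt (F j) (F (j + 1) x) x := by
    intro j hj x hx
    have hd := hφ.differentiableOn_iteratedDerivWithin (m := j) (by exact_mod_cast hj) hu x hx
    have h1 : HasDerivAt (iteratedDerivWithin j φ (Set.Ioo a b))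
        (iteratedDerivWithin (j + 1) φ (Set.Ioo a b) x) x := by
      rw [iteratedDerivWithin_succ]
      exact hd.hasDerivWithinAt.hasDerivAt (isOpen_Ioo.mem_nhds hx)
    exact (h1.const_mul l).add (hH j x hx)
  have hφc := hφ.continuousOn_iteratedDerivWithin le_rfl hu
  have hFK : ContinuousOn (F k) (Set.Ioo a b) := by
    simp only [F, hHk k hk, add_zero]
    exact continuousOn_const.mul hφc
  have hF0 : ∀ x, F 0 x = l * φ x + η x := fun x => by simp [F, H]
  have hlow : ∀ x ∈ Set.Ioo a b, |l| * δ ≤ |F k x| := by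
    intro x hx
    simp only [F, hHk k hk, add_zero, abs_mul]
    exact mul_le_mul_of_nonneg_left (hφk x hx) hlpos.le
  have hμ : 0 < |l| * δ := mul_pos hlpos hδ
  -- `F k` is continuous and does not vanish, so it has a constant sign.
  have hsign : (∀ x ∈ Set.Ioo a b, |l| * δ ≤ F k x) ∨ (∀ x ∈ Set.Ioo a b, F k x ≤ -(|l| * δ)) := by
    by_contra! hcon
    obtain ⟨⟨x, hx, hx'⟩, y, hy, hy'⟩ := hcon
    have hx0 : F k x ≤ 0 := by
      by_contra! h
      have := hlow x hx
      rw [abs_of_pos h] at this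
      linarith
    have hy0 : 0 ≤ F k y := by
      by_contra! h
      have := hlow y hy
      rw [abs_of_neg h] at this
      linarith
    obtain ⟨z, hz, hz0⟩ := isPreconnected_Ioo.intermediate_value hx hy hFK ⟨hx0, hy0⟩
    have := hlow z hz
    rw [hz0, abs_zero] at this
    linarith
  have hM : ∀ c d, a < c → c ≤ d → d < b →
      ‖∫ x in c..d, Complex.exp (Complex.I * (F 0 x : ℂ))‖
        ≤ (5 * 2 ^ (k - 1) - 2 : ℝ) * (|l| * δ) ^ (-(1 / (k : ℝ))) := by
    intro c d hc hcd hd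
    refine norm_integral_exp_le_of_kth_deriv hk hF hFK k hk le_rfl c d _ hc hcd hd hμ ?_
    have hsub := Set.Icc_subset_Ioo hc hd
    exact hsign.imp (fun h x hx => h x (hsub hx)) (fun h x hx => h x (hsub hx))
  have hFc0 : ContinuousOn (F 0) (Set.Ioo a b) :=
    fun x hx => (hF 0 hkpos x hx).continuousAt.continuousWithinAt
  have main := norm_integral_mul_le_of_forall_norm_integral_le hab (ψ := ψ)
    (E := fun x => Complex.exp (Complex.I * (F 0 x : ℂ)))
    (fun x => by rw [mul_comm Complex.I]; exact (Complex.norm_exp_ofReal_mul_I _).le)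
    (by fun_prop) hM hψc hψd hψint
  simp only [hF0] at main
  refine main.trans (le_of_eq ?_)
  rw [Real.mul_rpow hlpos.le hδ.le]
  ring
end

section
/- Let a < b be real numbers and δ > 0. Suppose φ : ℝ → ℝ is real-analytic on an open neighborhood of [a, b] and satisfies |φ''(x)| + |φ'''(x)| ≥ δ for all x ∈ [a, b], and suppose ψ : [a, b] → ℂ is continuously differentiable. Then there exists a constant C > 0 (depending on φ, ψ, and δ) such that for every real λ with |λ| ≥ 1 and every c ∈ ℝ, | ∫_a^b e^{i(λφ(x) + c x)} ψ(x) dx | ≤ C |λ|^{−1/3}. -/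
open scoped ENNReal
open MeasureTheory intervalIntegral

/-!
The proof is van der Corput's method, uniform in the linear term `c * x` because only derivatives
of the phase of order two and three are bounded below.

* `norm_integral_le_of_first`: if `f'` is monotone and `|f'| ≥ μ`, integrating by parts against
  `1 / f'` gives `|∫ e^{if}| ≤ 4 / μ`.
* `norm_integral_le_of_second`, `norm_integral_le_of_third`: if `f^(k) ≥ μ`, then `f^(k-1)` is at
  least `μ h` in absolute value outside an interval of length `2h` (`exists_center`,
  `norm_integral_le_split`). The short interval is estimated trivially, the rest by the bound for
  `k - 1`, and optimizing in `h` gives `O(μ^{-1/k})`.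

On `[a, b]` one of `φ''`, `-φ''`, `φ'''`, `-φ'''` exceeds `δ / 4` near each point, so by compactness
`[a, b]` splits into finitely many intervals on each of which one fixed alternative holds. Adding up
bounds all the primitives `∫_a^x e^{i(λφ + c·)}` by a multiple of `|λ|^{-1/3}`
(`exists_primitive_bound`), and one integration by parts inserts the amplitude `ψ`.
-/

/-- The oscillating factor `e^{i f(x)}`. -/
noncomputable def osc (f : ℝ → ℝ) (x : ℝ) : ℂ := Complex.exp (Complex.I * ((f x : ℝ) : ℂ))

lemma norm_osc (f : ℝ → ℝ) (x : ℝ) : ‖osc f x‖ = 1 := by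
  unfold osc
  rw [mul_comm, Complex.norm_exp_ofReal_mul_I]

lemma continuousOn_osc {f : ℝ → ℝ} {s : Set ℝ} (hf : ContinuousOn f s) :
    ContinuousOn (osc f) s := by
  unfold osc
  fun_prop

lemma hasDerivAt_osc {f : ℝ → ℝ} {f' x : ℝ} (hf : HasDerivAt f f' x) :
    HasDerivAt (osc f) (osc f x * (Complex.I * (f' : ℂ))) x := by
  unfold osc
  exact ((hf.ofReal_comp).const_mul Complex.I).cexp

lemma osc_neg (f : ℝ → ℝ) (x : ℝ) : osc (fun y => -f y) x = (starRingEnd ℂ) (osc f x) := by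
  unfold osc
  rw [← Complex.exp_conj]
  simp

lemma norm_integral_osc_neg (f : ℝ → ℝ) (u v : ℝ) :
    ‖∫ x in u..v, osc (fun y => -f y) x‖ = ‖∫ x in u..v, osc f x‖ := by
  simp_rw [osc_neg]
  rw [intervalIntegral.intervalIntegral_eq_integral_uIoc,
    intervalIntegral.intervalIntegral_eq_integral_uIoc, integral_conj, norm_smul, norm_smul,
    RCLike.norm_conj]

lemma norm_integral_le_of_first {f f1 f2 : ℝ → ℝ} {u v μ : ℝ} (huv : u ≤ v) (hμ : 0 < μ)
    (h1 : ∀ x ∈ Set.Icc u v, HasDerivAt f (f1 x) x)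
    (h2 : ∀ x ∈ Set.Icc u v, HasDerivAt f1 (f2 x) x)
    (hc : ContinuousOn f2 (Set.Icc u v))
    (hpos : ∀ x ∈ Set.Icc u v, 0 ≤ f2 x)
    (hlow : ∀ x ∈ Set.Icc u v, μ ≤ |f1 x|) :
    ‖∫ x in u..v, osc f x‖ ≤ 4 / μ := by
  have hne : ∀ x ∈ Set.Icc u v, f1 x ≠ 0 := fun x hx h0 => by
    have := hlow x hx
    rw [h0, abs_zero] at this
    linarith
  have hcf : ContinuousOn f (Set.Icc u v) := fun x hx => (h1 x hx).continuousAt.continuousWithinAt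
  have hcf1 : ContinuousOn f1 (Set.Icc u v) := fun x hx =>
    (h2 x hx).continuousAt.continuousWithinAt
  have hco := continuousOn_osc hcf
  have hcq : ContinuousOn (fun x => f2 x / f1 x ^ 2) (Set.Icc u v) :=
    hc.div (hcf1.pow 2) fun x hx => pow_ne_zero 2 (hne x hx)
  have hcq' : ContinuousOn (fun x => osc f x * ((f2 x / f1 x ^ 2 : ℝ) : ℂ)) (Set.Icc u v) :=
    hco.mul (Complex.continuous_ofReal.comp_continuousOn hcq)
  have i1 : IntervalIntegrable (fun x => osc f x) volume u v :=
    hco.intervalIntegrable_of_Icc huv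
  have i2 : IntervalIntegrable (fun x => f2 x / f1 x ^ 2) volume u v :=
    hcq.intervalIntegrable_of_Icc huv
  have i3 : IntervalIntegrable (fun x => osc f x * ((f2 x / f1 x ^ 2 : ℝ) : ℂ)) volume u v :=
    hcq'.intervalIntegrable_of_Icc huv
  have hinv : ∀ x ∈ Set.Icc u v, HasDerivAt (fun y => (f1 y)⁻¹) (-(f2 x / f1 x ^ 2)) x := by
    intro x hx
    have := (h2 x hx).inv (hne x hx)
    rw [← neg_div]
    exact this
  have e1 : ∫ x in u..v, -(f2 x / f1 x ^ 2) = (f1 v)⁻¹ - (f1 u)⁻¹ := by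
    apply integral_eq_sub_of_hasDerivAt
    · intro x hx
      rw [Set.uIcc_of_le huv] at hx
      exact hinv x hx
    · exact i2.neg
  have e2 : ∫ x in u..v, (Complex.I * osc f x - osc f x * ((f2 x / f1 x ^ 2 : ℝ) : ℂ))
      = osc f v * (((f1 v)⁻¹ : ℝ) : ℂ) - osc f u * (((f1 u)⁻¹ : ℝ) : ℂ) := by
    apply integral_eq_sub_of_hasDerivAt (f := fun x => osc f x * (((f1 x)⁻¹ : ℝ) : ℂ))
    · intro x hx
      rw [Set.uIcc_of_le huv] at hx
      have := (hasDerivAt_osc (h1 x hx)).mul (hinv x hx).ofReal_comp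
      refine this.congr_deriv ?_
      have h0 : (f1 x : ℂ) ≠ 0 := by exact_mod_cast hne x hx
      push_cast
      field_simp
      ring
    · exact (i1.const_mul _).sub i3
  rw [integral_sub (i1.const_mul _) i3, intervalIntegral.integral_const_mul] at e2
  have hb : ∀ x ∈ Set.Icc u v, |(f1 x)⁻¹| ≤ 1 / μ := fun x hx => by
    rw [abs_inv, ← one_div]
    exact one_div_le_one_div_of_le hμ (hlow x hx)
  have hu := hb u (Set.left_mem_Icc.2 huv)
  have hv := hb v (Set.right_mem_Icc.2 huv)
  have n3 : ‖∫ x in u..v, osc f x * ((f2 x / f1 x ^ 2 : ℝ) : ℂ)‖ ≤ (f1 u)⁻¹ - (f1 v)⁻¹ := by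
    have : (f1 u)⁻¹ - (f1 v)⁻¹ = ∫ x in u..v, f2 x / f1 x ^ 2 := by
      rw [intervalIntegral.integral_neg] at e1
      linarith
    rw [this]
    apply intervalIntegral.norm_integral_le_of_norm_le huv _ i2
    refine Filter.Eventually.of_forall fun x hx => ?_
    have hx' : x ∈ Set.Icc u v := ⟨hx.1.le, hx.2⟩
    rw [norm_mul, norm_osc, one_mul, Complex.norm_real, Real.norm_eq_abs, abs_of_nonneg]
    exact div_nonneg (hpos x hx') (sq_nonneg _)
  have e4 : Complex.I * ∫ x in u..v, osc f x
      = (osc f v * (((f1 v)⁻¹ : ℝ) : ℂ) - osc f u * (((f1 u)⁻¹ : ℝ) : ℂ))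
        + ∫ x in u..v, osc f x * ((f2 x / f1 x ^ 2 : ℝ) : ℂ) := by
    rw [← e2]
    ring
  have e5 : ‖∫ x in u..v, osc f x‖ = ‖Complex.I * ∫ x in u..v, osc f x‖ := by
    rw [norm_mul, Complex.norm_I, one_mul]
  rw [e5, e4]
  have t1 := norm_add_le (osc f v * (((f1 v)⁻¹ : ℝ) : ℂ) - osc f u * (((f1 u)⁻¹ : ℝ) : ℂ))
    (∫ x in u..v, osc f x * ((f2 x / f1 x ^ 2 : ℝ) : ℂ))
  have t2 := norm_sub_le (osc f v * (((f1 v)⁻¹ : ℝ) : ℂ)) (osc f u * (((f1 u)⁻¹ : ℝ) : ℂ))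
  rw [norm_mul, norm_mul, norm_osc, norm_osc, Complex.norm_real, Complex.norm_real,
    Real.norm_eq_abs, Real.norm_eq_abs] at t2
  have t3 := le_abs_self (f1 u)⁻¹
  have t4 := neg_abs_le (f1 v)⁻¹
  have : 4 / μ = 4 * (1 / μ) := by ring
  linarith

/-- A function with derivative at least `μ` grows at least linearly away from a suitable point `z`:
its zero, or the endpoint closest to being one. -/
lemma exists_center {g g' : ℝ → ℝ} {u v μ : ℝ} (huv : u ≤ v)
    (hg : ∀ x ∈ Set.Icc u v, HasDerivAt g (g' x) x) (hlow : ∀ x ∈ Set.Icc u v, μ ≤ g' x) :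
    ∃ z ∈ Set.Icc u v, (∀ x ∈ Set.Icc u v, x < z → g x ≤ -(μ * (z - x))) ∧
      (∀ x ∈ Set.Icc u v, z < x → μ * (x - z) ≤ g x) := by
  have hgc : ContinuousOn g (Set.Icc u v) := fun x hx => (hg x hx).continuousAt.continuousWithinAt
  have key : ∀ x ∈ Set.Icc u v, ∀ y ∈ Set.Icc u v, x ≤ y → μ * (y - x) ≤ g y - g x := by
    apply (convex_Icc u v).mul_sub_le_image_sub_of_le_deriv hgc
    · intro x hx
      exact (hg x (interior_subset hx)).differentiableAt.differentiableWithinAt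
    · intro x hx
      rw [(hg x (interior_subset hx)).deriv]
      exact hlow x (interior_subset hx)
  have hu := Set.left_mem_Icc.2 huv
  have hv := Set.right_mem_Icc.2 huv
  by_cases h1 : 0 ≤ g u
  · refine ⟨u, hu, fun x hx hxz => absurd hx.1 (not_le.2 hxz), fun x hx hxz => ?_⟩
    linarith [key u hu x hx hxz.le]
  by_cases h2 : g v ≤ 0
  · refine ⟨v, hv, fun x hx hxz => ?_, fun x hx hxz => absurd hx.2 (not_le.2 hxz)⟩
    linarith [key x hx v hv hxz.le]
  obtain ⟨z, hz, hz0⟩ := intermediate_value_Icc huv hgc ⟨(not_le.1 h1).le, (not_le.1 h2).le⟩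
  refine ⟨z, hz, fun x hx hxz => ?_, fun x hx hxz => ?_⟩
  · linarith [key x hx z hz hxz.le]
  · linarith [key z hz x hx hxz.le]

/-- Removing the interval of radius `h` around `z`, the two remaining pieces being bounded
by `B`. -/
lemma norm_integral_le_split {f : ℝ → ℝ} {u v z h B : ℝ} (hz : z ∈ Set.Icc u v) (hh : 0 < h)
    (hB : 0 ≤ B) (hf : ContinuousOn f (Set.Icc u v))
    (hl : u ≤ z - h → ‖∫ x in u..(z - h), osc f x‖ ≤ B)
    (hr : z + h ≤ v → ‖∫ x in (z + h)..v, osc f x‖ ≤ B) :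
    ‖∫ x in u..v, osc f x‖ ≤ 2 * h + 2 * B := by
  have huv : u ≤ v := hz.1.trans hz.2
  have hI : ∀ p ∈ Set.Icc u v, ∀ q ∈ Set.Icc u v,
      IntervalIntegrable (fun x => osc f x) volume p q := fun p hp q hq =>
    ((continuousOn_osc hf).mono (Set.uIcc_subset_Icc hp hq)).intervalIntegrable
  have hu := Set.left_mem_Icc.2 huv
  have hv := Set.right_mem_Icc.2 huv
  have hL : ∃ p ∈ Set.Icc u v, z - h ≤ p ∧ p ≤ z ∧ ‖∫ x in u..p, osc f x‖ ≤ B := by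
    by_cases hc : u ≤ z - h
    · exact ⟨z - h, ⟨hc, by linarith [hz.2]⟩, le_rfl, by linarith, hl hc⟩
    · exact ⟨u, hu, by linarith, hz.1, by simpa using hB⟩
  have hR : ∃ q ∈ Set.Icc u v, q ≤ z + h ∧ z ≤ q ∧ ‖∫ x in q..v, osc f x‖ ≤ B := by
    by_cases hc : z + h ≤ v
    · exact ⟨z + h, ⟨by linarith [hz.1], hc⟩, le_rfl, by linarith, hr hc⟩
    · exact ⟨v, hv, by linarith, hz.2, by simpa using hB⟩
  obtain ⟨p, hp, hp1, hp2, hpB⟩ := hL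
  obtain ⟨q, hq, hq1, hq2, hqB⟩ := hR
  have hm : ‖∫ x in p..q, osc f x‖ ≤ 1 * |q - p| :=
    intervalIntegral.norm_integral_le_of_norm_le_const fun x _ => (norm_osc f x).le
  rw [abs_of_nonneg (by linarith)] at hm
  rw [← integral_add_adjacent_intervals (hI u hu p hp) (hI p hp v hv),
    ← integral_add_adjacent_intervals (hI p hp q hq) (hI q hq v hv)]
  have t1 := norm_add_le (∫ x in u..p, osc f x)
    ((∫ x in p..q, osc f x) + ∫ x in q..v, osc f x)
  have t2 := norm_add_le (∫ x in p..q, osc f x) (∫ x in q..v, osc f x)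
  linarith

lemma norm_integral_le_of_second {f f1 f2 : ℝ → ℝ} {u v μ : ℝ} (huv : u ≤ v) (hμ : 0 < μ)
    (h1 : ∀ x ∈ Set.Icc u v, HasDerivAt f (f1 x) x)
    (h2 : ∀ x ∈ Set.Icc u v, HasDerivAt f1 (f2 x) x)
    (hc : ContinuousOn f2 (Set.Icc u v))
    (hlow : ∀ x ∈ Set.Icc u v, μ ≤ f2 x) :
    ‖∫ x in u..v, osc f x‖ ≤ 10 * μ ^ (-(1 / 2 : ℝ)) := by
  obtain ⟨z, hz, hzl, hzr⟩ := exists_center huv h2 hlow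
  set h : ℝ := μ ^ (-(1 / 2 : ℝ)) with hh
  have hh0 : 0 < h := Real.rpow_pos_of_pos hμ _
  have hμh : 4 / (μ * h) = 4 * h := by
    have : μ * h * h = 1 := by
      rw [mul_assoc, hh, ← Real.rpow_add hμ, show (-(1 / 2 : ℝ)) + -(1 / 2) = -1 by norm_num,
        Real.rpow_neg_one, mul_inv_cancel₀ hμ.ne']
    rw [div_eq_iff (by positivity)]
    linear_combination (-4) * this
  have hcf : ContinuousOn f (Set.Icc u v) := fun x hx => (h1 x hx).continuousAt.continuousWithinAt
  have := norm_integral_le_split (f := f) (B := 4 * h) hz hh0 (by positivity) hcf ?_ ?_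
  · linarith
  · intro hle
    have hs : Set.Icc u (z - h) ⊆ Set.Icc u v := Set.Icc_subset_Icc_right (by linarith [hz.2])
    rw [← hμh]
    refine norm_integral_le_of_first hle (by positivity) (fun x hx => h1 x (hs hx))
      (fun x hx => h2 x (hs hx)) (hc.mono hs) (fun x hx => hμ.le.trans (hlow x (hs hx))) ?_
    intro x hx
    have a1 := hzl x (hs hx) (by linarith [hx.2])
    have a2 : μ * h ≤ μ * (z - x) := mul_le_mul_of_nonneg_left (by linarith [hx.2]) hμ.le
    linarith [neg_le_abs (f1 x)]
  · intro hle
    have hs : Set.Icc (z + h) v ⊆ Set.Icc u v := Set.Icc_subset_Icc_left (by linarith [hz.1])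
    rw [← hμh]
    refine norm_integral_le_of_first hle (by positivity) (fun x hx => h1 x (hs hx))
      (fun x hx => h2 x (hs hx)) (hc.mono hs) (fun x hx => hμ.le.trans (hlow x (hs hx))) ?_
    intro x hx
    have a1 := hzr x (hs hx) (by linarith [hx.1])
    have a2 : μ * h ≤ μ * (x - z) := mul_le_mul_of_nonneg_left (by linarith [hx.1]) hμ.le
    linarith [le_abs_self (f1 x)]

lemma norm_integral_le_of_second_neg {f f1 f2 : ℝ → ℝ} {u v μ : ℝ} (huv : u ≤ v) (hμ : 0 < μ)
    (h1 : ∀ x ∈ Set.Icc u v, HasDerivAt f (f1 x) x)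
    (h2 : ∀ x ∈ Set.Icc u v, HasDerivAt f1 (f2 x) x)
    (hc : ContinuousOn f2 (Set.Icc u v))
    (hlow : ∀ x ∈ Set.Icc u v, μ ≤ -f2 x) :
    ‖∫ x in u..v, osc f x‖ ≤ 10 * μ ^ (-(1 / 2 : ℝ)) := by
  rw [← norm_integral_osc_neg]
  exact norm_integral_le_of_second (f := fun y => -f y) (f1 := fun y => -f1 y)
    (f2 := fun y => -f2 y) huv hμ (fun x hx => (h1 x hx).neg) (fun x hx => (h2 x hx).neg)
    hc.neg hlow

lemma norm_integral_le_of_third {f f1 f2 f3 : ℝ → ℝ} {u v μ : ℝ} (huv : u ≤ v) (hμ : 0 < μ)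
    (h1 : ∀ x ∈ Set.Icc u v, HasDerivAt f (f1 x) x)
    (h2 : ∀ x ∈ Set.Icc u v, HasDerivAt f1 (f2 x) x)
    (h3 : ∀ x ∈ Set.Icc u v, HasDerivAt f2 (f3 x) x)
    (hlow : ∀ x ∈ Set.Icc u v, μ ≤ f3 x) :
    ‖∫ x in u..v, osc f x‖ ≤ 22 * μ ^ (-(1 / 3 : ℝ)) := by
  obtain ⟨z, hz, hzl, hzr⟩ := exists_center huv h3 hlow
  set h : ℝ := μ ^ (-(1 / 3 : ℝ)) with hh
  have hh0 : 0 < h := Real.rpow_pos_of_pos hμ _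
  have hμh : (μ * h) ^ (-(1 / 2 : ℝ)) = h := by
    have : μ * h = μ ^ (2 / 3 : ℝ) := by
      nth_rewrite 1 [← Real.rpow_one μ]
      rw [hh, ← Real.rpow_add hμ]
      norm_num
    rw [this, ← Real.rpow_mul hμ.le, hh]
    norm_num
  have hcf : ContinuousOn f (Set.Icc u v) := fun x hx => (h1 x hx).continuousAt.continuousWithinAt
  have hc : ContinuousOn f2 (Set.Icc u v) := fun x hx => (h3 x hx).continuousAt.continuousWithinAt
  have := norm_integral_le_split (f := f) (B := 10 * h) hz hh0 (by positivity) hcf ?_ ?_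
  · linarith
  · intro hle
    have hs : Set.Icc u (z - h) ⊆ Set.Icc u v := Set.Icc_subset_Icc_right (by linarith [hz.2])
    refine (norm_integral_le_of_second_neg hle (μ := μ * h) (by positivity)
      (fun x hx => h1 x (hs hx)) (fun x hx => h2 x (hs hx)) (hc.mono hs) ?_).trans_eq
      (by rw [hμh])
    intro x hx
    have a1 := hzl x (hs hx) (by linarith [hx.2])
    have a2 : μ * h ≤ μ * (z - x) := mul_le_mul_of_nonneg_left (by linarith [hx.2]) hμ.le
    linarith
  · intro hle
    have hs : Set.Icc (z + h) v ⊆ Set.Icc u v := Set.Icc_subset_Icc_left (by linarith [hz.1])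
    refine (norm_integral_le_of_second hle (μ := μ * h) (by positivity)
      (fun x hx => h1 x (hs hx)) (fun x hx => h2 x (hs hx)) (hc.mono hs) ?_).trans_eq
      (by rw [hμh])
    intro x hx
    have a1 := hzr x (hs hx) (by linarith [hx.1])
    have a2 : μ * h ≤ μ * (x - z) := mul_le_mul_of_nonneg_left (by linarith [hx.1]) hμ.le
    linarith

lemma norm_integral_le_of_third_neg {f f1 f2 f3 : ℝ → ℝ} {u v μ : ℝ} (huv : u ≤ v) (hμ : 0 < μ)
    (h1 : ∀ x ∈ Set.Icc u v, HasDerivAt f (f1 x) x)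
    (h2 : ∀ x ∈ Set.Icc u v, HasDerivAt f1 (f2 x) x)
    (h3 : ∀ x ∈ Set.Icc u v, HasDerivAt f2 (f3 x) x)
    (hlow : ∀ x ∈ Set.Icc u v, μ ≤ -f3 x) :
    ‖∫ x in u..v, osc f x‖ ≤ 22 * μ ^ (-(1 / 3 : ℝ)) := by
  rw [← norm_integral_osc_neg]
  exact norm_integral_le_of_third (f := fun y => -f y) (f1 := fun y => -f1 y)
    (f2 := fun y => -f2 y) (f3 := fun y => -f3 y) huv hμ (fun x hx => (h1 x hx).neg)
    (fun x hx => (h2 x hx).neg) (fun x hx => (h3 x hx).neg) hlow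

/-- The decay estimate on an interval where `φ''` or `φ'''` is bounded away from zero with a
constant sign; the constant depends only on the lower bound `d`. -/
lemma norm_integral_le_piece {φ p1 p2 p3 : ℝ → ℝ} {u v d : ℝ} (huv : u ≤ v) (hd : 0 < d)
    (h1 : ∀ x ∈ Set.Icc u v, HasDerivAt φ (p1 x) x)
    (h2 : ∀ x ∈ Set.Icc u v, HasDerivAt p1 (p2 x) x)
    (h3 : ∀ x ∈ Set.Icc u v, HasDerivAt p2 (p3 x) x)
    (hlow : (∀ x ∈ Set.Icc u v, d ≤ p2 x) ∨ (∀ x ∈ Set.Icc u v, d ≤ -p2 x) ∨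
      (∀ x ∈ Set.Icc u v, d ≤ p3 x) ∨ (∀ x ∈ Set.Icc u v, d ≤ -p3 x))
    (l : ℝ) (hl : 1 ≤ |l|) (c : ℝ) :
    ‖∫ x in u..v, osc (fun x => l * φ x + c * x) x‖
      ≤ (10 * d ^ (-(1 / 2 : ℝ)) + 22 * d ^ (-(1 / 3 : ℝ))) * |l| ^ (-(1 / 3 : ℝ)) := by
  have k1 : ∀ x ∈ Set.Icc u v, HasDerivAt (fun x => l * φ x + c * x) (l * p1 x + c) x := by
    intro x hx
    exact (((h1 x hx).const_mul l).add ((hasDerivAt_id x).const_mul c)).congr_deriv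
      (by rw [mul_one])
  have k2 : ∀ x ∈ Set.Icc u v, HasDerivAt (fun x => l * p1 x + c) (l * p2 x) x := fun x hx =>
    ((h2 x hx).const_mul l).add_const c
  have k3 : ∀ x ∈ Set.Icc u v, HasDerivAt (fun x => l * p2 x) (l * p3 x) x := fun x hx =>
    (h3 x hx).const_mul l
  have hc : ContinuousOn (fun x => l * p2 x) (Set.Icc u v) := fun x hx =>
    (k3 x hx).continuousAt.continuousWithinAt
  have hl0 : 0 < |l| := by linarith
  have hμ : 0 < d * |l| := by positivity
  have b2 : 10 * (d * |l|) ^ (-(1 / 2 : ℝ)) ≤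
      (10 * d ^ (-(1 / 2 : ℝ)) + 22 * d ^ (-(1 / 3 : ℝ))) * |l| ^ (-(1 / 3 : ℝ)) := by
    rw [Real.mul_rpow hd.le hl0.le]
    have e : |l| ^ (-(1 / 2 : ℝ)) ≤ |l| ^ (-(1 / 3 : ℝ)) :=
      Real.rpow_le_rpow_of_exponent_le hl (by norm_num)
    have q1 : 0 < d ^ (-(1 / 2 : ℝ)) := Real.rpow_pos_of_pos hd _
    have q2 : 0 < d ^ (-(1 / 3 : ℝ)) := Real.rpow_pos_of_pos hd _
    have q3 : 0 < |l| ^ (-(1 / 3 : ℝ)) := Real.rpow_pos_of_pos hl0 _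
    have := mul_le_mul_of_nonneg_left e q1.le
    have := mul_pos q2 q3
    linarith
  have b3 : 22 * (d * |l|) ^ (-(1 / 3 : ℝ)) ≤
      (10 * d ^ (-(1 / 2 : ℝ)) + 22 * d ^ (-(1 / 3 : ℝ))) * |l| ^ (-(1 / 3 : ℝ)) := by
    rw [Real.mul_rpow hd.le hl0.le]
    have q1 : 0 < d ^ (-(1 / 2 : ℝ)) := Real.rpow_pos_of_pos hd _
    have q3 : 0 < |l| ^ (-(1 / 3 : ℝ)) := Real.rpow_pos_of_pos hl0 _
    have := mul_pos q1 q3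
    linarith
  have hpn : ∀ y : ℝ, 0 ≤ l → d ≤ y → d * |l| ≤ l * y := fun y h0 hy => by
    rw [abs_of_nonneg h0]
    nlinarith
  have hnn : ∀ y : ℝ, l ≤ 0 → d ≤ y → d * |l| ≤ -(l * y) := fun y h0 hy => by
    rw [abs_of_nonpos h0]
    nlinarith
  rcases le_total 0 l with h0 | h0
  · rcases hlow with h | h | h | h
    · exact (norm_integral_le_of_second huv hμ k1 k2 hc fun x hx => hpn _ h0 (h x hx)).trans b2
    · exact (norm_integral_le_of_second_neg huv hμ k1 k2 hc fun x hx => by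
        simpa using hpn _ h0 (h x hx)).trans b2
    · exact (norm_integral_le_of_third huv hμ k1 k2 k3 fun x hx => hpn _ h0 (h x hx)).trans b3
    · exact (norm_integral_le_of_third_neg huv hμ k1 k2 k3 fun x hx => by
        simpa using hpn _ h0 (h x hx)).trans b3
  · rcases hlow with h | h | h | h
    · exact (norm_integral_le_of_second_neg huv hμ k1 k2 hc fun x hx =>
        hnn _ h0 (h x hx)).trans b2
    · exact (norm_integral_le_of_second huv hμ k1 k2 hc fun x hx => by
        simpa using hnn _ h0 (h x hx)).trans b2
    · exact (norm_integral_le_of_third_neg huv hμ k1 k2 k3 fun x hx =>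
        hnn _ h0 (h x hx)).trans b3
    · exact (norm_integral_le_of_third huv hμ k1 k2 k3 fun x hx => by
        simpa using hnn _ h0 (h x hx)).trans b3

lemma exists_primitive_bound {φ p1 p2 p3 : ℝ → ℝ} {a b δ : ℝ} (hab : a ≤ b) (hδ : 0 < δ)
    (h1 : ∀ x ∈ Set.Icc a b, HasDerivAt φ (p1 x) x)
    (h2 : ∀ x ∈ Set.Icc a b, HasDerivAt p1 (p2 x) x)
    (h3 : ∀ x ∈ Set.Icc a b, HasDerivAt p2 (p3 x) x)
    (hc3 : ContinuousOn p3 (Set.Icc a b))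
    (hlow : ∀ x ∈ Set.Icc a b, δ ≤ |p2 x| + |p3 x|) :
    ∃ C > 0, ∀ l : ℝ, 1 ≤ |l| → ∀ c : ℝ, ∀ x ∈ Set.Icc a b,
      ‖∫ y in a..x, osc (fun y => l * φ y + c * y) y‖ ≤ C * |l| ^ (-(1 / 3 : ℝ)) := by
  have hc2 : ContinuousOn p2 (Set.Icc a b) := fun x hx => (h3 x hx).continuousAt.continuousWithinAt
  have hd : 0 < δ / 4 := by positivity
  let G : Fin 4 → ℝ → ℝ := ![p2, fun x => -p2 x, p3, fun x => -p3 x]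
  have hG : ∀ i, ContinuousOn (G i) (Set.Icc a b) := by
    intro i
    fin_cases i
    · exact hc2
    · exact hc2.neg
    · exact hc3
    · exact hc3.neg
  let S : Fin 4 → Set (Set.Icc a b) := fun i => {y | δ / 4 < G i y}
  have hSo : ∀ i, IsOpen (S i) := fun i =>
    isOpen_lt continuous_const (continuousOn_iff_continuous_domRestrict.1 (hG i))
  have hScov : (Set.univ : Set (Set.Icc a b)) ⊆ ⋃ i, S i := by
    rintro ⟨x, hx⟩ -
    rw [Set.mem_iUnion]
    by_contra! hcon
    have c0 : p2 x ≤ δ / 4 := not_lt.1 (hcon 0)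
    have c1 : -p2 x ≤ δ / 4 := not_lt.1 (hcon 1)
    have c2 : p3 x ≤ δ / 4 := not_lt.1 (hcon 2)
    have c3 : -p3 x ≤ δ / 4 := not_lt.1 (hcon 3)
    have := hlow x hx
    have := abs_le'.2 ⟨c0, c1⟩
    have := abs_le'.2 ⟨c2, c3⟩
    linarith
  obtain ⟨t, ht0, htm, ⟨m, hm⟩, htS⟩ := exists_monotone_Icc_subset_open_cover_Icc hab hSo hScov
  set K : ℝ := 10 * (δ / 4) ^ (-(1 / 2 : ℝ)) + 22 * (δ / 4) ^ (-(1 / 3 : ℝ)) with hK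
  have hK0 : 0 < K := by
    have q1 : 0 < (δ / 4) ^ (-(1 / 2 : ℝ)) := Real.rpow_pos_of_pos hd _
    have q2 : 0 < (δ / 4) ^ (-(1 / 3 : ℝ)) := Real.rpow_pos_of_pos hd _
    positivity
  have hφc : ContinuousOn φ (Set.Icc a b) := fun x hx => (h1 x hx).continuousAt.continuousWithinAt
  have main : ∀ n : ℕ, ∀ l : ℝ, 1 ≤ |l| → ∀ c : ℝ, ∀ x ∈ Set.Icc a (t n : ℝ),
      ‖∫ y in a..x, osc (fun y => l * φ y + c * y) y‖ ≤ (n * K) * |l| ^ (-(1 / 3 : ℝ)) := by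
    intro n
    induction n with
    | zero =>
      intro l hl c x hx
      have hxa : x = a := by
        have h := hx.2
        rw [ht0] at h
        exact le_antisymm h hx.1
      simp [hxa]
    | succ n ih =>
      intro l hl c x hx
      have hpos : 0 < |l| ^ (-(1 / 3 : ℝ)) := Real.rpow_pos_of_pos (by linarith) _
      rcases le_total x (t n) with hxn | hxn
      · refine (ih l hl c x ⟨hx.1, hxn⟩).trans ?_
        push_cast
        nlinarith [mul_pos hK0 hpos]
      · have hxb : x ≤ b := hx.2.trans (t (n + 1)).2.2
        have htn := (t n).2
        have hcosc : ContinuousOn (osc fun y => l * φ y + c * y) (Set.Icc a b) :=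
          continuousOn_osc (by fun_prop)
        have hI : ∀ p ∈ Set.Icc a b, ∀ q ∈ Set.Icc a b,
            IntervalIntegrable (osc fun y => l * φ y + c * y) volume p q := fun p hp q hq =>
          (hcosc.mono (Set.uIcc_subset_Icc hp hq)).intervalIntegrable
        have hs : Set.Icc (t n : ℝ) x ⊆ Set.Icc a b := Set.Icc_subset_Icc htn.1 hxb
        rw [← integral_add_adjacent_intervals (hI a (Set.left_mem_Icc.2 hab) _ htn)
          (hI _ htn x ⟨hx.1, hxb⟩)]
        have e1 := ih l hl c (t n) ⟨htn.1, le_rfl⟩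
        obtain ⟨i, hi⟩ := htS n
        have hi' : ∀ y ∈ Set.Icc (t n : ℝ) x, δ / 4 ≤ G i y := fun y hy =>
          le_of_lt (hi (show (⟨y, hs hy⟩ : Set.Icc a b) ∈ Set.Icc (t n) (t (n + 1)) from
            ⟨hy.1, hy.2.trans hx.2⟩))
        have e2 : ‖∫ y in (t n : ℝ)..x, osc (fun y => l * φ y + c * y) y‖
            ≤ K * |l| ^ (-(1 / 3 : ℝ)) := by
          refine norm_integral_le_piece hxn hd (fun y hy => h1 y (hs hy))
            (fun y hy => h2 y (hs hy)) (fun y hy => h3 y (hs hy)) ?_ l hl c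
          fin_cases i
          · exact Or.inl hi'
          · exact Or.inr (Or.inl hi')
          · exact Or.inr (Or.inr (Or.inl hi'))
          · exact Or.inr (Or.inr (Or.inr hi'))
        refine (norm_add_le _ _).trans ((add_le_add e1 e2).trans (le_of_eq ?_))
        push_cast
        ring
  refine ⟨(m + 1) * K, by positivity, fun l hl c x hx => ?_⟩
  have := main (m + 1) l hl c x (by rw [hm (m + 1) (by omega)]; exact hx)
  exact_mod_cast this

/-- **Key oscillatory-integral estimate at the rate `|λ|^{-1/3}`.**
If `φ` is real-analytic on a neighborhood of `[a,b]` with `|φ''| + |φ'''| ≥ δ > 0` on `[a,b]`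
and `ψ` is `C¹` on `[a,b]`, then there is `C > 0` such that for all `|λ| ≥ 1` and all `c ∈ ℝ`,
`|∫_a^b e^{i(λφ(x) + cx)} ψ(x) dx| ≤ C |λ|^{-1/3}`. -/
theorem oscillatory_integral_third_root_decay
    (a b : ℝ) (hab : a < b) (δ : ℝ) (hδ : 0 < δ)
    (φ : ℝ → ℝ) (hφ : AnalyticOnNhd ℝ φ (Set.Icc a b))
    (hφ23 : ∀ x ∈ Set.Icc a b, δ ≤ |iteratedDeriv 2 φ x| + |iteratedDeriv 3 φ x|)
    (ψ : ℝ → ℂ) (hψ : ContDiffOn ℝ 1 ψ (Set.Icc a b)) :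
    ∃ C > 0, ∀ l : ℝ, 1 ≤ |l| → ∀ c : ℝ,
      ‖∫ x in a..b, Complex.exp (Complex.I * ((l * φ x + c * x : ℝ) : ℂ)) * ψ x‖
        ≤ C * |l| ^ (-(1 / 3 : ℝ)) := by
  have hA : ∀ n, AnalyticOnNhd ℝ (iteratedDeriv n φ) (Set.Icc a b) := fun n => by
    rw [iteratedDeriv_eq_iterate]
    exact hφ.iterated_deriv n
  have hD : ∀ n, ∀ x ∈ Set.Icc a b,
      HasDerivAt (iteratedDeriv n φ) (iteratedDeriv (n + 1) φ x) x := fun n x hx => by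
    rw [iteratedDeriv_succ]
    exact (hA n x hx).differentiableAt.hasDerivAt
  have hD0 : ∀ x ∈ Set.Icc a b, HasDerivAt φ (iteratedDeriv 1 φ x) x := fun x hx => by
    simpa using hD 0 x hx
  obtain ⟨C, hC, hbound⟩ := exists_primitive_bound hab.le hδ hD0 (hD 1) (hD 2)
    (hA 3).continuousOn hφ23
  set ψ' : ℝ → ℂ := derivWithin ψ (Set.Icc a b) with hψ'
  have hψ'c : ContinuousOn ψ' (Set.Icc a b) :=
    hψ.continuousOn_derivWithin (uniqueDiffOn_Icc hab) le_rfl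
  obtain ⟨M, hM⟩ := isCompact_Icc.exists_bound_of_continuousOn hψ'c
  have ha := Set.left_mem_Icc.2 hab.le
  have hM0 : 0 ≤ M := (norm_nonneg _).trans (hM a ha)
  refine ⟨C * (‖ψ b‖ + M * (b - a) + 1), ?_, fun l hl c => ?_⟩
  · have : 0 ≤ M * (b - a) := mul_nonneg hM0 (by linarith)
    positivity
  have hpos : 0 < |l| ^ (-(1 / 3 : ℝ)) := Real.rpow_pos_of_pos (by linarith) _
  set f : ℝ → ℝ := fun y => l * φ y + c * y with hf
  set B : ℝ := C * |l| ^ (-(1 / 3 : ℝ)) with hB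
  have hB0 : 0 < B := mul_pos hC hpos
  have hφc := hφ.continuousOn
  have hcosc : ContinuousOn (osc f) (Set.Icc a b) := continuousOn_osc (by fun_prop)
  have hiosc : IntervalIntegrable (osc f) volume a b := hcosc.intervalIntegrable_of_Icc hab.le
  set F : ℝ → ℂ := fun x => ∫ y in a..x, osc f y with hF
  have hFB : ∀ x ∈ Set.Icc a b, ‖F x‖ ≤ B := fun x hx => hbound l hl c x hx
  have hFc : ContinuousOn F (Set.Icc a b) := by
    have := intervalIntegral.continuousOn_primitive_interval (μ := volume) (f := osc f) (a := a)
      (b := b) (by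
        rw [Set.uIcc_of_le hab.le]
        exact hcosc.integrableOn_Icc)
    rwa [Set.uIcc_of_le hab.le] at this
  have hFd : ∀ x ∈ Set.Ioo a b, HasDerivAt F (osc f x) x := fun x hx => by
    have hnhds : Set.Icc a b ∈ nhds x := Icc_mem_nhds hx.1 hx.2
    apply intervalIntegral.integral_hasDerivAt_right
    · exact (hcosc.mono (Set.Icc_subset_Icc_right hx.2.le)).intervalIntegrable_of_Icc hx.1.le
    · exact ⟨Set.Icc a b, hnhds, hcosc.aestronglyMeasurable measurableSet_Icc⟩
    · exact hcosc.continuousAt hnhds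
  have hψd : ∀ x ∈ Set.Ioo a b, HasDerivAt ψ (ψ' x) x := fun x hx =>
    ((hψ.differentiableOn one_ne_zero x ⟨hx.1.le, hx.2.le⟩).hasDerivWithinAt).hasDerivAt
      (Icc_mem_nhds hx.1 hx.2)
  have i1 : IntervalIntegrable (fun x => osc f x * ψ x) volume a b :=
    (hcosc.mul hψ.continuousOn).intervalIntegrable_of_Icc hab.le
  have i2 : IntervalIntegrable (fun x => F x * ψ' x) volume a b :=
    (hFc.mul hψ'c).intervalIntegrable_of_Icc hab.le
  have parts : ∫ x in a..b, (osc f x * ψ x + F x * ψ' x) = F b * ψ b - F a * ψ a :=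
    integral_eq_sub_of_hasDerivAt_of_le (f := fun x => F x * ψ x) hab.le
      (hFc.mul hψ.continuousOn) (fun x hx => (hFd x hx).mul (hψd x hx)) (i1.add i2)
  have hFa : F a = 0 := by simp [hF]
  rw [integral_add i1 i2, hFa, zero_mul, sub_zero] at parts
  have hgoal : ∫ x in a..b, Complex.exp (Complex.I * ((l * φ x + c * x : ℝ) : ℂ)) * ψ x
      = F b * ψ b - ∫ x in a..b, F x * ψ' x := by
    rw [← parts, add_sub_cancel_right]
    rfl
  rw [hgoal]
  have n1 : ‖F b * ψ b‖ ≤ B * ‖ψ b‖ := by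
    rw [norm_mul]
    exact mul_le_mul_of_nonneg_right (hFB b (Set.right_mem_Icc.2 hab.le)) (norm_nonneg _)
  have n2 : ‖∫ x in a..b, F x * ψ' x‖ ≤ (B * M) * |b - a| := by
    apply intervalIntegral.norm_integral_le_of_norm_le_const
    intro x hx
    rw [Set.uIoc_of_le hab.le] at hx
    have hx' : x ∈ Set.Icc a b := ⟨hx.1.le, hx.2⟩
    rw [norm_mul]
    exact mul_le_mul (hFB x hx') (hM x hx') (norm_nonneg _) hB0.le
  rw [abs_of_pos (by linarith)] at n2
  calc ‖F b * ψ b - ∫ x in a..b, F x * ψ' x‖ ≤ B * ‖ψ b‖ + (B * M) * (b - a) :=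
        (norm_sub_le _ _).trans (add_le_add n1 n2)
    _ ≤ B * (‖ψ b‖ + M * (b - a) + 1) := by linarith
    _ = C * (‖ψ b‖ + M * (b - a) + 1) * |l| ^ (-(1 / 3 : ℝ)) := by
        rw [hB]
        ring
end
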